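/- Let 𝒟 be regularly varying with exponent γ > 1 and let {G_n}_{n≥1} be generated by the erased configuration model with degree sequences IID(𝒟). Let f be the density of 𝒟, f^*(k) = k f(k)/E[𝒟] with cdf F^*, and 𝒟^* a random variable with density f^*, so E[F^*(𝒟^*)] = Σ_{ℓ≥1} f^*(ℓ) F^*(ℓ). Then for any δ > 0 and any k with f^*(k) > 0, lim_{n→∞} P(|Θ̂_n(k) − E[F^*(𝒟^*)]| 1{f_n(k) > 0} > δ) = 0, where f_n is the empirical density of the pre-erasure degrees. -/

import Mathlib

open MeasureTheory Filter
open scoped ENNReal NNReal BigOperators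

namespace ANNDPaper

/-- A function is slowly varying if `l (λ x) / l x → 1` as `x → ∞` for every `λ > 0`. -/
def SlowlyVarying (l : ℝ → ℝ) : Prop :=
  ∀ lam : ℝ, 0 < lam → Tendsto (fun x => l (lam * x) / l x) atTop (nhds 1)

/-- A function is eventually monotone if it is monotone on some interval `[K, ∞)`. -/
def EventuallyMonotone (l : ℝ → ℝ) : Prop :=
  ∃ K : ℝ, MonotoneOn l (Set.Ici K) ∨ AntitoneOn l (Set.Ici K)

/-- Cumulative distribution function of a mass function on `ℕ`. -/
noncomputable def cdfOf (f : ℕ → ℝ) (k : ℕ) : ℝ := ∑ j ∈ Finset.range (k + 1), f j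

/-- Kantorovich–Rubinstein distance between two mass functions on `ℕ`,
valued in `ℝ≥0∞`. -/
noncomputable def d1 (f g : ℕ → ℝ) : ℝ≥0∞ :=
  ∑' k : ℕ, ENNReal.ofReal |cdfOf f k - cdfOf g k|

/-- Total variation distance between two mass functions on `ℕ`, valued in `ℝ≥0∞`. -/
noncomputable def dtv (f g : ℕ → ℝ) : ℝ≥0∞ :=
  (∑' k : ℕ, ENNReal.ofReal |f k - g k|) / 2

/-- Mean of a mass function on `ℕ`. -/
noncomputable def meanPMF (f : ℕ → ℝ) : ℝ := ∑' k : ℕ, (k : ℝ) * f k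

/-- Size-biased version `f^*(k) = k f(k) / E[f]` of a mass function on `ℕ`. -/
noncomputable def sizeBiased (f : ℕ → ℝ) (k : ℕ) : ℝ := (k : ℝ) * f k / meanPMF f

/-- `L_n`, the sum of the degrees. -/
def degSum {n : ℕ} (d : Fin n → ℕ) : ℕ := ∑ i, d i

/-- Empirical degree density `f_n(k)`. -/
noncomputable def empDens {n : ℕ} (d : Fin n → ℕ) (k : ℕ) : ℝ :=
  (∑ i, if d i = k then (1 : ℝ) else 0) / (n : ℝ)

/-- Size-biased empirical degree density `f_n^*(k)`. -/
noncomputable def empSB {n : ℕ} (d : Fin n → ℕ) (k : ℕ) : ℝ :=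
  (∑ i, if d i = k then (k : ℝ) else 0) / (degSum d : ℝ)

/-- Size-biased empirical cumulative distribution function `F_n^*(ℓ)`. -/
noncomputable def empSBcdf {n : ℕ} (d : Fin n → ℕ) (l : ℕ) : ℝ :=
  (∑ i, if d i ≤ l then (d i : ℝ) else 0) / (degSum d : ℝ)

/-- Empirical joint degree distribution `h_n(k, ℓ)` of a multigraph with degrees `d`
and edge counts `g` (self-loops counted twice). -/
noncomputable def jointDens {n : ℕ} (d : Fin n → ℕ) (g : Fin n → Fin n → ℕ) (k l : ℕ) : ℝ :=
  (∑ i, ∑ j, if d i = k ∧ d j = l then (g i j : ℝ) else 0) / (degSum d : ℝ)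

/-- Average nearest neighbor degree `Φ_n(k)`. -/
noncomputable def ANND {n : ℕ} (d : Fin n → ℕ) (g : Fin n → Fin n → ℕ) (k : ℕ) : ℝ :=
  if 0 < empDens d k then (∑' l : ℕ, jointDens d g k l * (l : ℝ)) / empSB d k else 0

/-- Average nearest neighbor rank `Θ_n(k)`. -/
noncomputable def ANNR {n : ℕ} (d : Fin n → ℕ) (g : Fin n → Fin n → ℕ) (k : ℕ) : ℝ :=
  if 0 < empDens d k then (∑' l : ℕ, jointDens d g k l * empSBcdf d l) / empSB d k else 0

/-- The degree of node `i` in a multigraph with edge counts `g` (self-loops counted twice). -/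
def degOf {n : ℕ} (g : Fin n → Fin n → ℕ) (i : Fin n) : ℕ := ∑ j, g i j

/-- Erased edge counts: self-loops removed, multiple edges merged. -/
def erase {n : ℕ} (g : Fin n → Fin n → ℕ) (i j : Fin n) : ℕ :=
  if i = j then 0 else min (g i j) 1

/-- Degrees after erasure. -/
def eraseDeg {n : ℕ} (g : Fin n → Fin n → ℕ) (i : Fin n) : ℕ := ∑ j, erase g i j

/-- The stubs (half-edges) attached to the nodes, given a degree sequence `d`. -/
abbrev Stubs {n : ℕ} (d : Fin n → ℕ) : Type := (i : Fin n) × Fin (d i)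

/-- A perfect matching of the stubs: a fixed-point-free involution. -/
def Matching {n : ℕ} (d : Fin n → ℕ) : Type :=
  {σ : Equiv.Perm (Stubs d) // ∀ s, σ s ≠ s ∧ σ (σ s) = s}

instance {n : ℕ} (d : Fin n → ℕ) : MeasurableSpace (Matching d) := ⊤

/-- The uniform probability measure on perfect matchings of the stubs. -/
noncomputable def uniformMatching {n : ℕ} (d : Fin n → ℕ) : Measure (Matching d) :=
  (Nat.card (Matching d) : ℝ≥0∞)⁻¹ • Measure.count

/-- The edge counts `G_{ij}` of the configuration-model multigraph determined by a
matching of the stubs: the number of stubs of `i` matched to stubs of `j`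
(self-loops are automatically counted twice). -/
def cmEdges {n : ℕ} (d : Fin n → ℕ) (σ : Matching d) (i j : Fin n) : ℕ :=
  (Finset.univ.filter (fun s : Fin (d i) => ((σ.1 ⟨i, s⟩).1 = j))).card

/-- Parity correction: add `1` to the last coordinate if the total sum is odd,
making the total even. -/
def parityFix (n : ℕ) (x : Fin n → ℕ) (i : Fin n) : ℕ :=
  if (i : ℕ) = n - 1 ∧ (∑ j, x j) % 2 = 1 then x i + 1 else x i

/-- The law of the degree sequence `IID(𝒟)` of length `n`, where `ν` is the law of `𝒟`:
i.i.d. samples with the last one corrected for parity. -/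
noncomputable def iidLaw (n : ℕ) (ν : Measure ℕ) : Measure (Fin n → ℕ) :=
  Measure.map (parityFix n) (Measure.pi fun _ : Fin n => ν)

/-- The joint law of (degree sequence, edge counts) in the configuration model of size `n`
with degree sequence `IID(𝒟)`, where `ν` is the law of `𝒟`: sample the degrees, then an
independent uniform perfect matching of the stubs. -/
noncomputable def cmLaw (n : ℕ) (ν : Measure ℕ) :
    Measure ((Fin n → ℕ) × (Fin n → Fin n → ℕ)) :=
  (iidLaw n ν).bind fun d => (uniformMatching d).map fun σ => (d, cmEdges d σ)


/-- Perfect matchings of a finite set, as fixed-point-free involutions. -/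
abbrev PM (S : Type*) : Type _ := {σ : Equiv.Perm S // ∀ s, σ s ≠ s ∧ σ (σ s) = s}

noncomputable instance instFintypePM (S : Type*) [Finite S] : Fintype (PM S) :=
  Fintype.ofFinite _

/-- Conjugation of matchings by a permutation. -/
def conjPM {S : Type*} (π : Equiv.Perm S) : PM S ≃ PM S where
  toFun σ := ⟨π⁻¹ * σ.1 * π, fun s => by
    constructor
    · intro h
      have := (σ.2 (π s)).1
      apply this
      simp only [Equiv.Perm.mul_apply, Equiv.Perm.inv_eq_iff_eq] at h
      exact h
    · simp [Equiv.Perm.mul_apply, (σ.2 (π s)).2]⟩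
  invFun σ := ⟨π * σ.1 * π⁻¹, fun s => by
    constructor
    · intro h
      have := (σ.2 (π⁻¹ s)).1
      apply this
      simp only [Equiv.Perm.mul_apply] at h
      exact Equiv.Perm.eq_inv_iff_eq.2 h
    · have := (σ.2 (π⁻¹ s)).2
      simp only [Equiv.Perm.mul_apply]
      rw [show π⁻¹ (π (σ.1 (π⁻¹ s))) = σ.1 (π⁻¹ s) from π.symm_apply_apply _, this]
      exact π.apply_symm_apply s⟩
  left_inv σ := by ext s; simp [Equiv.Perm.mul_apply]
  right_inv σ := by ext s; simp [Equiv.Perm.mul_apply]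

section PMlemmas

variable {S : Type*} [Fintype S] [DecidableEq S]

/-- Number of matchings with `σ s = t`. -/
noncomputable def c1 (s t : S) : ℝ := ∑ σ : PM S, if σ.1 s = t then (1 : ℝ) else 0

/-- Number of matchings with `σ s = t` and `σ s' = t'`. -/
noncomputable def c2 (s t s' t' : S) : ℝ :=
  ∑ σ : PM S, if σ.1 s = t ∧ σ.1 s' = t' then (1 : ℝ) else 0

lemma c1_swap (s t t' : S) (h : t ≠ s) (h' : t' ≠ s) : c1 s t = c1 s t' := by
  unfold c1
  rw [← Equiv.sum_comp (conjPM (Equiv.swap t t'))]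
  apply Finset.sum_congr rfl
  intro σ _
  have : (((conjPM (Equiv.swap t t')) σ).1 s = t) ↔ σ.1 s = t' := by
    simp [conjPM, Equiv.Perm.mul_apply, Equiv.swap_apply_of_ne_of_ne h.symm h'.symm,
      Equiv.swap_apply_eq_iff]
  simp only [this]

lemma c2_swap (s t s' u u' : S) (h1 : u ≠ s) (h2 : u ≠ t) (h3 : u ≠ s')
    (h1' : u' ≠ s) (h2' : u' ≠ t) (h3' : u' ≠ s') : c2 s t s' u = c2 s t s' u' := by
  unfold c2
  rw [← Equiv.sum_comp (conjPM (Equiv.swap u u'))]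
  apply Finset.sum_congr rfl
  intro σ _
  have : (((conjPM (Equiv.swap u u')) σ).1 s' = u) ↔ σ.1 s' = u' := by
    simp [conjPM, Equiv.Perm.mul_apply, Equiv.swap_apply_of_ne_of_ne h3.symm h3'.symm,
      Equiv.swap_apply_eq_iff]
  have h2 : (((conjPM (Equiv.swap u u')) σ).1 s = t) ↔ σ.1 s = t := by
    simp [conjPM, Equiv.Perm.mul_apply, Equiv.swap_apply_of_ne_of_ne h1.symm h1'.symm,
      Equiv.swap_apply_eq_iff, Equiv.swap_apply_of_ne_of_ne h2.symm h2'.symm]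
  simp only [this, h2]

lemma c1_self (s : S) : c1 s s = 0 := by
  unfold c1
  apply Finset.sum_eq_zero
  intro σ _
  simp [(σ.2 s).1]

lemma sum_c1 (s : S) : ∑ t, c1 s t = (Fintype.card (PM S) : ℝ) := by
  unfold c1
  rw [Finset.sum_comm]
  simp

lemma c1_eq (s t : S) (h : t ≠ s) :
    ((Fintype.card S : ℝ) - 1) * c1 s t = (Fintype.card (PM S) : ℝ) := by
  rw [← sum_c1 s, ← Finset.add_sum_erase _ _ (Finset.mem_univ s), c1_self, zero_add]
  rw [Finset.sum_congr rfl (g := fun _ => c1 s t)]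
  · rw [Finset.sum_const, Finset.card_erase_of_mem (Finset.mem_univ s), nsmul_eq_mul,
      Finset.card_univ, Nat.cast_sub (Fintype.card_pos_iff.2 ⟨s⟩)]
    simp
  · intro u hu
    exact c1_swap s u t (Finset.ne_of_mem_erase hu) h

lemma sum_c2 (s t s' : S) : ∑ t', c2 s t s' t' = c1 s t := by
  unfold c2 c1
  rw [Finset.sum_comm]
  apply Finset.sum_congr rfl
  intro σ _
  by_cases h : σ.1 s = t <;> simp [h]

lemma c2_eq_zero (s t s' t' : S)
    (h : ∀ σ : PM S, σ.1 s = t → σ.1 s' = t' → False) : c2 s t s' t' = 0 := by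
  unfold c2
  apply Finset.sum_eq_zero
  intro σ _
  rw [if_neg]
  rintro ⟨a, b⟩
  exact h σ a b

lemma PM_inv (σ : PM S) {s t : S} (h : σ.1 s = t) : σ.1 t = s := by
  rw [← h]; exact (σ.2 s).2

lemma c2_eq (s t s' t' : S) (hst : t ≠ s) (hss : s' ≠ s) (hts : t ≠ s')
    (h1 : t' ≠ s) (h2 : t' ≠ t) (h3 : t' ≠ s') :
    ((Fintype.card S : ℝ) - 3) * c2 s t s' t' = c1 s t := by
  rw [← sum_c2 s t s']
  have hsub : ({s, t, s'} : Finset S) ⊆ Finset.univ := Finset.subset_univ _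
  rw [← Finset.sum_sdiff hsub]
  have hz : ∑ x ∈ ({s, t, s'} : Finset S), c2 s t s' x = 0 := by
    apply Finset.sum_eq_zero
    intro x hx
    simp only [Finset.mem_insert, Finset.mem_singleton] at hx
    apply c2_eq_zero
    intro σ a b
    have a' := PM_inv σ a
    rcases hx with rfl | rfl | rfl
    · have := PM_inv σ b
      rw [a] at this; exact hts this
    · have := PM_inv σ b
      rw [a'] at this; exact hss this.symm
    · exact (σ.2 x).1 b
  rw [hz, add_zero, Finset.sum_congr rfl (g := fun _ => c2 s t s' t')]
  · have hc : ({s, t, s'} : Finset S).card = 3 := by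
      rw [Finset.card_eq_three]
      exact ⟨s, t, s', hst.symm, hss.symm, hts, rfl⟩
    have hle := Finset.card_le_card hsub
    rw [Finset.sum_const, Finset.card_sdiff_of_subset hsub, nsmul_eq_mul,
      Nat.cast_sub hle, hc, Finset.card_univ]
    simp
  · intro u hu
    simp only [Finset.mem_sdiff, Finset.mem_univ, true_and, Finset.mem_insert,
      Finset.mem_singleton, not_or] at hu
    exact c2_swap s t s' u t' hu.1 hu.2.1 hu.2.2 h1 h2 h3

lemma sum_single (s : S) (hL : 1 < Fintype.card S) (h : S → ℝ) :
    ∑ σ : PM S, h (σ.1 s) = (Fintype.card (PM S) : ℝ) / ((Fintype.card S : ℝ) - 1) *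
      ∑ t, if t = s then 0 else h t := by
  have hL' : (0 : ℝ) < (Fintype.card S : ℝ) - 1 := by
    have : (1 : ℝ) < Fintype.card S := by exact_mod_cast hL
    linarith
  have : ∑ σ : PM S, h (σ.1 s) = ∑ t, c1 s t * h t := by
    unfold c1
    simp_rw [Finset.sum_mul]
    rw [Finset.sum_comm]
    simp
  rw [this, Finset.mul_sum]
  apply Finset.sum_congr rfl
  intro t _
  by_cases hts : t = s
  · simp [hts, c1_self]
  · rw [if_neg hts, ← c1_eq s t hts]
    field_simp

lemma sum_pair (s s' : S) (hss : s' ≠ s) (hL : 3 < Fintype.card S) (h : S → S → ℝ) :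
    ∑ σ : PM S, h (σ.1 s) (σ.1 s') =
      (Fintype.card (PM S) : ℝ) / ((Fintype.card S : ℝ) - 1) * h s' s +
      (Fintype.card (PM S) : ℝ) / (((Fintype.card S : ℝ) - 1) * ((Fintype.card S : ℝ) - 3)) *
      ∑ t, ∑ t', if t ≠ s ∧ t ≠ s' ∧ t' ≠ s ∧ t' ≠ s' ∧ t' ≠ t then h t t' else 0 := by
  have hL0 : (0 : ℝ) < (Fintype.card S : ℝ) - 3 := by
    have : (3 : ℝ) < Fintype.card S := by exact_mod_cast hL
    linarith
  have hL' : (0 : ℝ) < (Fintype.card S : ℝ) - 1 := by linarith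
  have h0 : ∑ σ : PM S, h (σ.1 s) (σ.1 s') = ∑ t, ∑ t', c2 s t s' t' * h t t' := by
    unfold c2
    simp_rw [Finset.sum_mul]
    have : ∀ t, ∑ t', ∑ σ : PM S, (if σ.1 s = t ∧ σ.1 s' = t' then (1:ℝ) else 0) * h t t'
      = ∑ σ : PM S, ∑ t', (if σ.1 s = t ∧ σ.1 s' = t' then (1:ℝ) else 0) * h t t' :=
      fun t => Finset.sum_comm
    simp_rw [this]
    rw [Finset.sum_comm]
    apply Finset.sum_congr rfl
    intro σ _
    rw [Finset.sum_eq_single (σ.1 s)]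
    · simp
    · intro b _ hb
      simp [hb.symm]
    · simp
  have h1 : ∀ t t', c2 s t s' t' = (if t = s' ∧ t' = s then
      (Fintype.card (PM S) : ℝ) / ((Fintype.card S : ℝ) - 1) else 0) +
      (if t ≠ s ∧ t ≠ s' ∧ t' ≠ s ∧ t' ≠ s' ∧ t' ≠ t then
        (Fintype.card (PM S) : ℝ) / (((Fintype.card S : ℝ) - 1) * ((Fintype.card S : ℝ) - 3))
        else 0) := by
    intro t t'
    by_cases ha : t ≠ s ∧ t ≠ s' ∧ t' ≠ s ∧ t' ≠ s' ∧ t' ≠ t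
    · rw [if_pos ha, if_neg (by tauto), zero_add]
      obtain ⟨a, b, c, d, e⟩ := ha
      have e1 := c2_eq s t s' t' a hss b c e d
      have e2 := c1_eq s t a
      rw [← e2, ← e1]
      field_simp
    · rw [if_neg ha, add_zero]
      by_cases hb : t = s' ∧ t' = s
      · rw [if_pos hb]
        obtain ⟨rfl, rfl⟩ := hb
        have : c2 t' t t t' = c1 t' t := by
          unfold c2 c1
          apply Finset.sum_congr rfl
          intro σ _
          congr 1
          simp only [eq_iff_iff, and_iff_left_iff_imp]
          exact fun h => PM_inv σ h
        rw [this, ← c1_eq t' t hss]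
        field_simp
      · rw [if_neg hb]
        apply c2_eq_zero
        intro σ p q
        apply ha
        have p' := PM_inv σ p
        have q' := PM_inv σ q
        refine ⟨?_, ?_, ?_, ?_, ?_⟩
        · rintro rfl; exact (σ.2 _).1 p
        · rintro rfl
          apply hb
          exact ⟨rfl, q.symm.trans p'⟩
        · rintro rfl
          apply hb
          exact ⟨p.symm.trans q', rfl⟩
        · rintro rfl; exact (σ.2 _).1 q
        · rintro rfl
          exact hss (q'.symm.trans p')
  rw [h0]
  simp_rw [h1, add_mul, Finset.sum_add_distrib]
  congr 1
  · rw [Finset.sum_eq_single s', Finset.sum_eq_single s]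
    · simp
    · intro b _ hb; simp [hb]
    · simp
    · intro b _ hb; simp [hb]
    · simp
  · rw [Finset.mul_sum]
    apply Finset.sum_congr rfl
    intro t _
    rw [Finset.mul_sum]
    apply Finset.sum_congr rfl
    intro t' _
    split_ifs <;> simp

end PMlemmas

lemma second_moment {S : Type*} [Fintype S] [DecidableEq S] (K : Finset S) (ψ : S → ℝ)
    (h0 : ∑ t, ψ t = 0) (h1 : ∀ t, |ψ t| ≤ 1) (hL : 3 < Fintype.card S) :
    ∑ σ : PM S, (∑ s ∈ K, ψ (σ.1 s)) ^ 2 ≤ (Fintype.card (PM S) : ℝ) *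
      ((K.card : ℝ) + (K.card : ℝ) ^ 2 * (1 / ((Fintype.card S : ℝ) - 1) +
        4 / (((Fintype.card S : ℝ) - 1) * ((Fintype.card S : ℝ) - 3)))) := by
  have hL0 : (0 : ℝ) < (Fintype.card S : ℝ) - 3 := by
    have : (3 : ℝ) < Fintype.card S := by exact_mod_cast hL
    linarith
  have hL' : (0 : ℝ) < (Fintype.card S : ℝ) - 1 := by linarith
  set C : ℝ := (Fintype.card (PM S) : ℝ) with hC
  have hC0 : 0 ≤ C := Nat.cast_nonneg _
  set r : ℝ := (1 / ((Fintype.card S : ℝ) - 1) +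
        4 / (((Fintype.card S : ℝ) - 1) * ((Fintype.card S : ℝ) - 3))) with hr
  have hr0 : 0 ≤ r := by positivity
  have hprod : ∀ a b, ψ a * ψ b ≤ 1 := by
    intro a b
    have := mul_le_mul (h1 a) (h1 b) (abs_nonneg _) zero_le_one
    rw [← abs_mul, one_mul] at this
    exact (le_abs_self _).trans this
  have hterm : ∀ s s', ∑ σ : PM S, ψ (σ.1 s) * ψ (σ.1 s') ≤ (if s = s' then C else 0) + C * r := by
    intro s s'
    by_cases hss : s = s'
    · rw [if_pos hss]
      have : ∑ σ : PM S, ψ (σ.1 s) * ψ (σ.1 s') ≤ ∑ σ : PM S, (1 : ℝ) :=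
        Finset.sum_le_sum fun σ _ => hprod _ _
      simp only [Finset.sum_const, Finset.card_univ, nsmul_eq_mul, mul_one] at this
      have h2 : 0 ≤ C * r := mul_nonneg hC0 hr0
      linarith
    · rw [if_neg hss, zero_add]
      rw [sum_pair s s' (Ne.symm hss) hL (fun a b => ψ a * ψ b)]
      have hin : (∑ t, ∑ t', if t ≠ s ∧ t ≠ s' ∧ t' ≠ s ∧ t' ≠ s' ∧ t' ≠ t then
          ψ t * ψ t' else 0) ≤ 4 := by
        let φ : S → ℝ := fun t => if t ≠ s ∧ t ≠ s' then ψ t else 0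
        have e1 : ∀ t t', (if t ≠ s ∧ t ≠ s' ∧ t' ≠ s ∧ t' ≠ s' ∧ t' ≠ t then
          ψ t * ψ t' else 0) = φ t * φ t' - (if t' = t then φ t * φ t' else 0) := by
          intro t t'
          simp only [φ]
          by_cases a : t = s <;> by_cases b : t = s' <;> by_cases c : t' = s <;>
            by_cases d : t' = s' <;> by_cases e : t' = t <;> simp_all
        simp_rw [e1, Finset.sum_sub_distrib, ← Finset.mul_sum]
        rw [← Finset.sum_mul]
        have e2 : ∑ t, φ t = -(ψ s + ψ s') := by
          have : ∀ t, φ t = ψ t - (if t = s then ψ t else 0) - (if t = s' then ψ t else 0) := by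
            intro t
            simp only [φ]
            by_cases a : t = s <;> by_cases b : t = s' <;> simp_all
          simp_rw [this, Finset.sum_sub_distrib, h0]
          simp
          ring
        have e3 : 0 ≤ ∑ t, ∑ t', (if t' = t then φ t * φ t' else 0) := by
          apply Finset.sum_nonneg; intro t _
          apply Finset.sum_nonneg; intro t' _
          split_ifs with h
          · rw [h]; exact mul_self_nonneg _
          · exact le_rfl
        rw [e2]
        have a := abs_le.1 (h1 s)
        have b := abs_le.1 (h1 s')
        nlinarith [hprod s s, hprod s' s', hprod s s']
      have a1 : C / ((Fintype.card S : ℝ) - 1) * (ψ s' * ψ s) ≤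
          C / ((Fintype.card S : ℝ) - 1) * 1 :=
        mul_le_mul_of_nonneg_left (hprod _ _) (by positivity)
      have a2 := mul_le_mul_of_nonneg_left hin (show 0 ≤ C / (((Fintype.card S : ℝ) - 1) *
        ((Fintype.card S : ℝ) - 3)) by positivity)
      refine (add_le_add a1 a2).trans (le_of_eq ?_)
      rw [hr]; ring
  have e : ∑ σ : PM S, (∑ s ∈ K, ψ (σ.1 s)) ^ 2 =
      ∑ s ∈ K, ∑ s' ∈ K, ∑ σ : PM S, ψ (σ.1 s) * ψ (σ.1 s') := by
    simp_rw [sq, Finset.sum_mul_sum]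
    rw [Finset.sum_comm]
    apply Finset.sum_congr rfl
    intro s _
    rw [Finset.sum_comm]
  rw [e]
  calc ∑ s ∈ K, ∑ s' ∈ K, ∑ σ : PM S, ψ (σ.1 s) * ψ (σ.1 s')
      ≤ ∑ s ∈ K, ∑ s' ∈ K, ((if s = s' then C else 0) + C * r) :=
        Finset.sum_le_sum fun s _ => Finset.sum_le_sum fun s' _ => hterm s s'
    _ = C * ((K.card : ℝ) + (K.card : ℝ) ^ 2 * r) := by
        simp only [Finset.sum_add_distrib, Finset.sum_const, nsmul_eq_mul, Finset.sum_ite_eq]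
        rw [Finset.sum_congr rfl (g := fun _ => C) (fun x hx => by rw [if_pos hx])]
        simp only [Finset.sum_const, nsmul_eq_mul]
        ring

section cm

variable {n : ℕ} (d : Fin n → ℕ)

lemma card_stubs : Fintype.card (Stubs d) = degSum d := by
  simp [degSum, Fintype.card_sigma]

lemma sum_stubs_vertex (h : Fin n → ℝ) : ∑ s : Stubs d, h s.1 = ∑ i, (d i : ℝ) * h i := by
  rw [Fintype.sum_sigma]
  simp

lemma cmEdges_deg (σ : Matching d) (i : Fin n) : ∑ j, cmEdges d σ i j = d i := by
  unfold cmEdges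
  have := Finset.card_eq_sum_card_fiberwise (s := (Finset.univ : Finset (Fin (d i))))
    (f := fun s => (σ.1 ⟨i, s⟩).1) (t := Finset.univ) (by simp [Set.MapsTo])
  rw [← this]
  simp

lemma cmEdges_sum (σ : Matching d) (i : Fin n) (h : Fin n → ℝ) :
    ∑ j, (cmEdges d σ i j : ℝ) * h j = ∑ a : Fin (d i), h (σ.1 ⟨i, a⟩).1 := by
  unfold cmEdges
  simp_rw [Finset.card_filter]
  push_cast
  simp_rw [Finset.sum_mul]
  rw [Finset.sum_comm]
  simp

lemma cmEdges_symm (σ : Matching d) (i j : Fin n) : cmEdges d σ i j = cmEdges d σ j i := by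
  have key : ∀ i j, cmEdges d σ i j =
      (Finset.univ.filter (fun s : Stubs d => s.1 = i ∧ (σ.1 s).1 = j)).card := by
    intro i j
    unfold cmEdges
    rw [Finset.card_filter, Finset.card_filter, Fintype.sum_sigma, Finset.sum_eq_single i]
    · simp
    · intro b _ hb; simp [hb]
    · simp
  rw [key, key]
  apply Finset.card_bij' (fun s _ => σ.1 s) (fun s _ => σ.1 s)
  · intro s hs
    simp only [Finset.mem_filter, Finset.mem_univ, true_and] at hs ⊢
    rw [(σ.2 s).2]; exact ⟨hs.2, hs.1⟩
  · intro s hs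
    simp only [Finset.mem_filter, Finset.mem_univ, true_and] at hs ⊢
    rw [(σ.2 s).2]; exact ⟨hs.2, hs.1⟩
  · intro s _; exact (σ.2 s).2
  · intro s _; exact (σ.2 s).2

lemma bad_imp (σ : Matching d) (i : Fin n) (h : eraseDeg (cmEdges d σ) i ≠ d i) :
    (∃ a, (σ.1 ⟨i, a⟩).1 = i) ∨ ∃ a b, a ≠ b ∧ (σ.1 ⟨i, a⟩).1 = (σ.1 ⟨i, b⟩).1 := by
  by_contra! hc
  obtain ⟨h1, h2⟩ := hc
  apply h
  rw [← cmEdges_deg d σ i]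
  unfold eraseDeg
  apply Finset.sum_congr rfl
  intro j _
  unfold erase
  split_ifs with hij
  · subst hij
    unfold cmEdges
    symm
    rw [Finset.card_eq_zero, Finset.filter_eq_empty_iff]
    intro a _
    exact h1 a
  · rw [min_eq_left]
    unfold cmEdges
    rw [Finset.card_le_one]
    intro a ha b hb
    simp only [Finset.mem_filter, Finset.mem_univ, true_and] at ha hb
    by_contra hab
    exact h2 a b hab (ha.trans hb.symm)

lemma sum_bad (i : Fin n) (hL : 3 < degSum d) :
    ∑ σ : PM (Stubs d), (if eraseDeg (cmEdges d σ) i = d i then (0 : ℝ) else 1) ≤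
    (Fintype.card (PM (Stubs d)) : ℝ) * ((d i : ℝ) ^ 2 * (2 / ((degSum d : ℝ) - 1) +
      (∑ j, (d j : ℝ) ^ 2) / (((degSum d : ℝ) - 1) * ((degSum d : ℝ) - 3)))) := by
  have hcard := card_stubs d
  have hL0 : (0 : ℝ) < (degSum d : ℝ) - 3 := by
    have : (3 : ℝ) < degSum d := by exact_mod_cast hL
    linarith
  have hL' : (0 : ℝ) < (degSum d : ℝ) - 1 := by linarith
  set C : ℝ := (Fintype.card (PM (Stubs d)) : ℝ) with hC
  have hC0 : 0 ≤ C := Nat.cast_nonneg _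
  have hpt : ∀ σ : PM (Stubs d), (if eraseDeg (cmEdges d σ) i = d i then (0 : ℝ) else 1) ≤
      (∑ a : Fin (d i), if (σ.1 ⟨i, a⟩).1 = i then (1 : ℝ) else 0) +
      ∑ a : Fin (d i), ∑ b : Fin (d i), if a ≠ b ∧ (σ.1 ⟨i, a⟩).1 = (σ.1 ⟨i, b⟩).1
        then (1 : ℝ) else 0 := by
    intro σ
    have n1 : ∀ a : Fin (d i), (0:ℝ) ≤ if (σ.1 ⟨i, a⟩).1 = i then (1 : ℝ) else 0 := by
      intro a; split_ifs <;> simp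
    have n2 : ∀ a b : Fin (d i), (0:ℝ) ≤ if a ≠ b ∧ (σ.1 ⟨i, a⟩).1 = (σ.1 ⟨i, b⟩).1
        then (1 : ℝ) else 0 := by
      intro a b; split_ifs <;> simp
    have n3 : ∀ a : Fin (d i), (0:ℝ) ≤ ∑ b : Fin (d i),
        if a ≠ b ∧ (σ.1 ⟨i, a⟩).1 = (σ.1 ⟨i, b⟩).1
        then (1 : ℝ) else 0 := fun a => Finset.sum_nonneg fun b _ => n2 a b
    split_ifs with h
    · exact add_nonneg (Finset.sum_nonneg fun a _ => n1 a) (Finset.sum_nonneg fun a _ => n3 a)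
    · rcases bad_imp d σ i h with ⟨a, ha⟩ | ⟨a, b, hab, hv⟩
      · have := Finset.single_le_sum (fun a _ => n1 a) (Finset.mem_univ a)
        rw [if_pos ha] at this
        have := Finset.sum_nonneg fun a (_ : a ∈ Finset.univ) => n3 a
        linarith
      · have t1 := Finset.single_le_sum (fun a _ => n3 a) (Finset.mem_univ a)
        have t2 := Finset.single_le_sum (fun b _ => n2 a b) (Finset.mem_univ b)
        rw [if_pos ⟨hab, hv⟩] at t2
        have := Finset.sum_nonneg fun a (_ : a ∈ Finset.univ) => n1 a
        linarith
  have b1 : ∀ a : Fin (d i), ∑ σ : PM (Stubs d), (if (σ.1 ⟨i, a⟩).1 = i then (1 : ℝ) else 0) ≤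
      C / ((degSum d : ℝ) - 1) * d i := by
    intro a
    rw [sum_single (S := Stubs d) ⟨i, a⟩ (by omega) (fun t => if t.1 = i then (1:ℝ) else 0), hcard]
    apply mul_le_mul_of_nonneg_left _ (by positivity)
    calc _ ≤ ∑ t : Stubs d, (if t.1 = i then (1 : ℝ) else 0) := by
          apply Finset.sum_le_sum; intro t _; split_ifs <;> simp
      _ = d i := by
          rw [sum_stubs_vertex d (fun j => if j = i then (1:ℝ) else 0)]; simp
  have b2 : ∀ a b : Fin (d i), ∑ σ : PM (Stubs d),
      (if a ≠ b ∧ (σ.1 ⟨i, a⟩).1 = (σ.1 ⟨i, b⟩).1 then (1 : ℝ) else 0) ≤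
      C / ((degSum d : ℝ) - 1) + C / (((degSum d : ℝ) - 1) * ((degSum d : ℝ) - 3)) *
        (∑ j, (d j : ℝ) ^ 2) := by
    intro a b
    by_cases hab : a = b
    · simp only [hab, ne_eq, not_true_eq_false, false_and, if_false, Finset.sum_const_zero]
      have : 0 ≤ ∑ j, (d j : ℝ) ^ 2 := Finset.sum_nonneg fun j _ => by positivity
      positivity
    · have hne : (⟨i, b⟩ : Stubs d) ≠ ⟨i, a⟩ := by
        intro h; apply hab; simpa using h.symm
      simp only [ne_eq, hab, not_false_eq_true, true_and]
      rw [sum_pair (S := Stubs d) ⟨i, a⟩ ⟨i, b⟩ hne (by omega)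
        (fun t t' => if t.1 = t'.1 then (1:ℝ) else 0), hcard]
      have hQ : (∑ t : Stubs d, ∑ t' : Stubs d, if t.1 = t'.1 then (1:ℝ) else 0) =
          ∑ j, (d j : ℝ) ^ 2 := by
        have : ∀ t : Stubs d, (∑ t' : Stubs d, if t.1 = t'.1 then (1:ℝ) else 0) = d t.1 := by
          intro t
          rw [sum_stubs_vertex d (fun j => if t.1 = j then (1:ℝ) else 0)]; simp
        simp_rw [this]
        rw [sum_stubs_vertex d (fun j => (d j : ℝ))]
        simp_rw [sq]
      rw [← hQ]
      simp only [if_true, mul_one]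
      apply add_le_add le_rfl
      apply mul_le_mul_of_nonneg_left _ (by positivity)
      apply Finset.sum_le_sum; intro t _
      apply Finset.sum_le_sum; intro t' _
      split_ifs <;> simp
  calc _ ≤ ∑ σ : PM (Stubs d), ((∑ a : Fin (d i), if (σ.1 ⟨i, a⟩).1 = i then (1 : ℝ) else 0) +
      ∑ a : Fin (d i), ∑ b : Fin (d i), if a ≠ b ∧ (σ.1 ⟨i, a⟩).1 = (σ.1 ⟨i, b⟩).1
        then (1 : ℝ) else 0) := Finset.sum_le_sum fun σ _ => hpt σ
    _ = (∑ a : Fin (d i), ∑ σ : PM (Stubs d), if (σ.1 ⟨i, a⟩).1 = i then (1 : ℝ) else 0) +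
      ∑ a : Fin (d i), ∑ b : Fin (d i), ∑ σ : PM (Stubs d),
        if a ≠ b ∧ (σ.1 ⟨i, a⟩).1 = (σ.1 ⟨i, b⟩).1 then (1 : ℝ) else 0 := by
        rw [Finset.sum_add_distrib]
        congr 1
        · rw [Finset.sum_comm]
        · rw [Finset.sum_comm]
          apply Finset.sum_congr rfl
          intro a _
          rw [Finset.sum_comm]
    _ ≤ (∑ a : Fin (d i), C / ((degSum d : ℝ) - 1) * d i) +
      ∑ a : Fin (d i), ∑ b : Fin (d i), (C / ((degSum d : ℝ) - 1) +
        C / (((degSum d : ℝ) - 1) * ((degSum d : ℝ) - 3)) * (∑ j, (d j : ℝ) ^ 2)) :=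
        add_le_add (Finset.sum_le_sum fun a _ => b1 a)
          (Finset.sum_le_sum fun a _ => Finset.sum_le_sum fun b _ => b2 a b)
    _ = _ := by
        simp only [Finset.sum_const, Finset.card_univ, Fintype.card_fin, nsmul_eq_mul]
        ring

/-- Total degree of nodes affected by erasure. -/
noncomputable def badDeg {n : ℕ} (d : Fin n → ℕ) (g : Fin n → Fin n → ℕ) : ℝ :=
  ∑ i, if eraseDeg g i = d i then (0 : ℝ) else (d i : ℝ)

/-- Total degree of nodes of degree larger than `M`. -/
noncomputable def tailDeg {n : ℕ} (d : Fin n → ℕ) (M : ℕ) : ℝ :=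
  ∑ i, if M < d i then (d i : ℝ) else 0

lemma sum_badDeg (M : ℕ) (hL : 3 < degSum d) :
    ∑ σ : PM (Stubs d), badDeg d (cmEdges d σ) ≤
    (Fintype.card (PM (Stubs d)) : ℝ) * (n * ((M : ℝ) ^ 3 * (2 / ((degSum d : ℝ) - 1) +
      (∑ j, (d j : ℝ) ^ 2) / (((degSum d : ℝ) - 1) * ((degSum d : ℝ) - 3)))) +
      tailDeg d M) := by
  have hL0 : (0 : ℝ) < (degSum d : ℝ) - 3 := by
    have : (3 : ℝ) < degSum d := by exact_mod_cast hL
    linarith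
  have hL' : (0 : ℝ) < (degSum d : ℝ) - 1 := by linarith
  have hQ : 0 ≤ ∑ j, (d j : ℝ) ^ 2 := Finset.sum_nonneg fun j _ => by positivity
  set C : ℝ := (Fintype.card (PM (Stubs d)) : ℝ) with hC
  have hC0 : 0 ≤ C := Nat.cast_nonneg _
  set r : ℝ := (2 / ((degSum d : ℝ) - 1) +
      (∑ j, (d j : ℝ) ^ 2) / (((degSum d : ℝ) - 1) * ((degSum d : ℝ) - 3))) with hr
  have hr0 : 0 ≤ r := by positivity
  unfold badDeg
  rw [Finset.sum_comm]
  have hi : ∀ i, ∑ σ : PM (Stubs d), (if eraseDeg (cmEdges d σ) i = d i then (0 : ℝ)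
      else (d i : ℝ)) ≤ C * ((M : ℝ) ^ 3 * r) + C * (if M < d i then (d i : ℝ) else 0) := by
    intro i
    by_cases hM : M < d i
    · rw [if_pos hM]
      have : ∑ σ : PM (Stubs d), (if eraseDeg (cmEdges d σ) i = d i then (0 : ℝ)
        else (d i : ℝ)) ≤ ∑ σ : PM (Stubs d), (d i : ℝ) := by
        apply Finset.sum_le_sum; intro σ _; split_ifs <;> simp
      simp only [Finset.sum_const, Finset.card_univ, nsmul_eq_mul] at this
      have : 0 ≤ C * ((M : ℝ) ^ 3 * r) := by positivity
      linarith
    · rw [if_neg hM, mul_zero, add_zero]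
      have hM' : (d i : ℝ) ≤ M := by exact_mod_cast not_lt.1 hM
      have e : ∑ σ : PM (Stubs d), (if eraseDeg (cmEdges d σ) i = d i then (0 : ℝ)
        else (d i : ℝ)) = (d i : ℝ) * ∑ σ : PM (Stubs d),
          (if eraseDeg (cmEdges d σ) i = d i then (0 : ℝ) else 1) := by
        rw [Finset.mul_sum]
        apply Finset.sum_congr rfl; intro σ _; split_ifs <;> simp
      rw [e]
      calc _ ≤ (d i : ℝ) * (C * ((d i : ℝ) ^ 2 * r)) :=
            mul_le_mul_of_nonneg_left (sum_bad d i hL) (by positivity)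
        _ = C * ((d i : ℝ) ^ 3 * r) := by ring
        _ ≤ _ := by gcongr
  refine (Finset.sum_le_sum fun i _ => hi i).trans (le_of_eq ?_)
  rw [Finset.sum_add_distrib]
  simp only [Finset.sum_const, Finset.card_univ, Fintype.card_fin, nsmul_eq_mul, tailDeg]
  rw [← Finset.mul_sum]
  ring

end cm

section det

variable {n : ℕ}

lemma erase_le (g : Fin n → Fin n → ℕ) (i j : Fin n) : erase g i j ≤ g i j := by
  unfold erase; split_ifs
  · exact Nat.zero_le _
  · exact min_le_left _ _

lemma erase_eq_of_good (d : Fin n → ℕ) (g : Fin n → Fin n → ℕ) (hdeg : ∀ i, ∑ j, g i j = d i)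
    (i : Fin n) (h : eraseDeg g i = d i) (j : Fin n) : erase g i j = g i j := by
  rw [← hdeg i] at h
  unfold eraseDeg at h
  exact (Finset.sum_eq_sum_iff_of_le (fun j _ => erase_le g i j)).1 h j (Finset.mem_univ j)

lemma ANNR_eq (D : Fin n → ℕ) (G : Fin n → Fin n → ℕ) (k : ℕ) (hk : 1 ≤ k) (Nh : ℝ)
    (hNh : Nh = ∑ i, if D i = k then (1 : ℝ) else 0) (hpos : 0 < Nh) :
    0 < (degSum D : ℝ) ∧ ANNR D G k =
      (∑ i, ∑ j, if D i = k then (G i j : ℝ) * empSBcdf D (D j) else 0) / (k * Nh) := by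
  have hk' : (0 : ℝ) < k := by exact_mod_cast hk
  have hL : (k : ℝ) * Nh ≤ degSum D := by
    rw [hNh, Finset.mul_sum]
    unfold degSum
    push_cast
    apply Finset.sum_le_sum
    intro i _
    split_ifs with h
    · rw [h]; simp
    · simp
  have hL0 : 0 < (degSum D : ℝ) := lt_of_lt_of_le (by positivity) hL
  have hn : 0 < (n : ℝ) := by
    rcases Nat.eq_zero_or_pos n with h | h
    · subst h; simp at hNh; linarith
    · exact_mod_cast h
  refine ⟨hL0, ?_⟩
  unfold ANNR
  have h1 : 0 < empDens D k := by
    unfold empDens; rw [← hNh]; positivity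
  rw [if_pos h1]
  have h2 : empSB D k = k * Nh / degSum D := by
    unfold empSB; rw [hNh, Finset.mul_sum]
    congr 1
    apply Finset.sum_congr rfl; intro i _; split_ifs <;> simp
  have h3 : HasSum (fun l : ℕ => jointDens D G k l * empSBcdf D l)
      ((∑ i, ∑ j, if D i = k then (G i j : ℝ) * empSBcdf D (D j) else 0) / degSum D) := by
    unfold jointDens
    simp_rw [Finset.sum_div, Finset.sum_mul]
    apply hasSum_sum; intro i _
    apply hasSum_sum; intro j _
    have := hasSum_single (f := fun l : ℕ => (if D i = k ∧ D j = l then (G i j : ℝ) else 0) /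
      (degSum D : ℝ) * empSBcdf D l) (D j) (by
        intro b hb; simp [Ne.symm hb])
    convert this using 1
    by_cases h : D i = k
    · simp [h]; ring
    · simp [h]
  rw [h3.tsum_eq, h2]
  field_simp

lemma ratio_bound (B A P Q : ℝ) (hB : 0 ≤ B) (hBP : B ≤ P) (hP : 0 < P) (hQ : 0 < Q) :
    |B / P - A / Q| ≤ (|B - A| + |P - Q|) / Q := by
  have e : B / P - A / Q = (B - A) / Q - (B / P) * ((P - Q) / Q) := by
    field_simp; ring
  have hr0 : 0 ≤ B / P := by positivity
  have hr1 : B / P ≤ 1 := by rw [div_le_one hP]; exact hBP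
  rw [e]
  calc _ ≤ |(B - A) / Q| + |(B / P) * ((P - Q) / Q)| := abs_sub _ _
    _ = |B - A| / Q + (B / P) * (|P - Q| / Q) := by
        rw [abs_mul, abs_of_nonneg hr0, abs_div, abs_div, abs_of_pos hQ]
    _ ≤ |B - A| / Q + 1 * (|P - Q| / Q) := by gcongr
    _ = _ := by ring

set_option maxHeartbeats 1000000 in
lemma det_bound (d : Fin n → ℕ) (g : Fin n → Fin n → ℕ) (hsym : ∀ i j, g i j = g j i)
    (hdeg : ∀ i, ∑ j, g i j = d i) (k : ℕ) (hk : 1 ≤ k) (φ : ℕ → ℝ)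
    (hφ0 : ∀ l, 0 ≤ φ l) (hφ1 : ∀ l, φ l ≤ 1) (ε : ℝ)
    (hF : ∀ l, |empSBcdf d l - φ l| ≤ ε) (N : ℝ)
    (hN : N = ∑ i, if d i = k then (1 : ℝ) else 0) (hX : badDeg d g < N) :
    |ANNR (eraseDeg g) (erase g) k -
      (∑ i, if d i = k then ∑ j, (g i j : ℝ) * φ (d j) else 0) / (k * N)| ≤
      6 * (badDeg d g / N) + ε := by
  have hk' : (1 : ℝ) ≤ k := by exact_mod_cast hk
  set X := badDeg d g with hXdef
  have hX0 : 0 ≤ X := by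
    rw [hXdef]; unfold badDeg
    apply Finset.sum_nonneg; intro i _; split_ifs <;> simp
  have hN0 : 0 < N := lt_of_le_of_lt hX0 hX
  have hDd : ∀ i, eraseDeg g i ≤ d i := by
    intro i; rw [← hdeg i]; unfold eraseDeg
    exact Finset.sum_le_sum fun j _ => erase_le g i j
  have hbad : ∀ i, eraseDeg g i ≠ d i → 1 ≤ d i := by
    intro i hi
    have := lt_of_le_of_ne (hDd i) hi
    omega
  set Nh : ℝ := ∑ i, if eraseDeg g i = k then (1 : ℝ) else 0 with hNh
  have hNN : |Nh - N| ≤ X := by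
    rw [hNh, hN, ← Finset.sum_sub_distrib, hXdef]
    unfold badDeg
    refine (Finset.abs_sum_le_sum_abs _ _).trans (Finset.sum_le_sum fun i _ => ?_)
    by_cases h : eraseDeg g i = d i
    · simp [h]
    · have h1 : (1 : ℝ) ≤ d i := by exact_mod_cast hbad i h
      rw [if_neg h]
      rw [abs_le]
      constructor <;> split_ifs <;> linarith
  have hNh0 : 0 < Nh := by
    have := (abs_le.1 hNN).1; linarith
  obtain ⟨hLh, hANNR⟩ := ANNR_eq (eraseDeg g) (erase g) k hk Nh hNh hNh0
  set D := eraseDeg g with hD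
  set G := erase g with hG
  have hLL : |(degSum D : ℝ) - degSum d| ≤ X := by
    unfold degSum
    push_cast
    rw [← Finset.sum_sub_distrib, hXdef]
    unfold badDeg
    refine (Finset.abs_sum_le_sum_abs _ _).trans (Finset.sum_le_sum fun i _ => ?_)
    by_cases h : D i = d i
    · simp [h, ← hD]
    · have h1 : (D i : ℝ) ≤ d i := by exact_mod_cast hDd i
      have h2 : (0 : ℝ) ≤ D i := Nat.cast_nonneg _
      rw [if_neg h, abs_le]
      constructor <;> linarith
  have hLN : N ≤ degSum d := by
    rw [hN]; unfold degSum; push_cast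
    apply Finset.sum_le_sum; intro i _
    split_ifs with h
    · rw [h]; exact hk'
    · simp
  have hL0 : 0 < (degSum d : ℝ) := hN0.trans_le hLN
  -- the two empirical size-biased distribution functions are close
  have hFF : ∀ l, |empSBcdf D l - empSBcdf d l| ≤ 2 * (X / N) := by
    intro l
    unfold empSBcdf
    set U : ℝ := ∑ i, if D i ≤ l then (D i : ℝ) else 0 with hU
    set V : ℝ := ∑ i, if d i ≤ l then (d i : ℝ) else 0 with hV
    have hUV : |U - V| ≤ X := by
      rw [hU, hV, ← Finset.sum_sub_distrib, hXdef]
      unfold badDeg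
      refine (Finset.abs_sum_le_sum_abs _ _).trans (Finset.sum_le_sum fun i _ => ?_)
      by_cases h : D i = d i
      · simp [h, ← hD]
      · have h1 : (D i : ℝ) ≤ d i := by exact_mod_cast hDd i
        have h2 : (0 : ℝ) ≤ D i := Nat.cast_nonneg _
        rw [if_neg h, abs_le]
        constructor <;> split_ifs <;> linarith
    have hU0 : 0 ≤ U := Finset.sum_nonneg fun i _ => by split_ifs <;> simp
    have hUL : U ≤ degSum D := by
      rw [hU]; unfold degSum; push_cast
      apply Finset.sum_le_sum; intro i _; split_ifs <;> simp
    refine (ratio_bound U V _ _ hU0 hUL hLh hL0).trans ?_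
    calc _ ≤ (X + X) / degSum d := div_le_div_of_nonneg_right (add_le_add hUV hLL) hL0.le
      _ ≤ (X + X) / N := div_le_div_of_nonneg_left (by linarith) hN0 hLN
      _ = _ := by ring
  have hFφ : ∀ l, |empSBcdf D l - φ l| ≤ 2 * (X / N) + ε := by
    intro l
    have := abs_sub_le (empSBcdf D l) (empSBcdf d l) (φ l)
    linarith [hFF l, hF l]
  have hε : 0 ≤ ε := (abs_nonneg _).trans (hF 0)
  have hXN : 0 ≤ X / N := div_nonneg hX0 hN0.le
  have hFh0 : ∀ l, 0 ≤ empSBcdf D l := by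
    intro l; unfold empSBcdf
    apply div_nonneg _ hLh.le
    exact Finset.sum_nonneg fun i _ => by split_ifs <;> simp
  have hFh1 : ∀ l, empSBcdf D l ≤ 1 := by
    intro l; unfold empSBcdf
    rw [div_le_one hLh]; unfold degSum; push_cast
    apply Finset.sum_le_sum; intro i _; split_ifs <;> simp
  set B : ℝ := ∑ i, ∑ j, if D i = k then (G i j : ℝ) * empSBcdf D (D j) else 0 with hB
  have hdegR : ∀ i, ∑ j, (g i j : ℝ) = d i := by intro i; exact_mod_cast hdeg i
  have hDegR : ∀ i, ∑ j, (G i j : ℝ) = D i := by intro i; rw [hD]; unfold eraseDeg; push_cast; rfl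
  have hA : (∑ i, if d i = k then ∑ j, (g i j : ℝ) * φ (d j) else 0) =
      ∑ i, ∑ j, if d i = k then (g i j : ℝ) * φ (d j) else 0 := by
    apply Finset.sum_congr rfl; intro i _; split_ifs <;> simp
  set A : ℝ := ∑ i, if d i = k then ∑ j, (g i j : ℝ) * φ (d j) else 0
  have hB0 : 0 ≤ B := Finset.sum_nonneg fun i _ => Finset.sum_nonneg fun j _ => by
    split_ifs
    · exact mul_nonneg (Nat.cast_nonneg _) (hFh0 _)
    · exact le_rfl
  have hB1 : B ≤ k * Nh := by
    rw [hB, hNh, Finset.mul_sum]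
    apply Finset.sum_le_sum; intro i _
    split_ifs with h
    · calc ∑ j, (G i j : ℝ) * empSBcdf D (D j) ≤ ∑ j, (G i j : ℝ) :=
            Finset.sum_le_sum fun j _ => mul_le_of_le_one_right (Nat.cast_nonneg _) (hFh1 _)
        _ = _ := by rw [hDegR, h]; simp
    · simp
  have hBA : |B - A| ≤ (2 * k + 1) * X + k * N * (2 * (X / N) + ε) := by
    rw [hA, hB, ← Finset.sum_sub_distrib]
    simp_rw [← Finset.sum_sub_distrib]
    let b : Fin n → ℝ := fun i => if D i = d i then 0 else 1
    have hb0 : ∀ i, 0 ≤ b i := fun i => by simp only [b]; split_ifs <;> simp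
    have hbX : ∑ i, b i ≤ X := by
      rw [hXdef]; unfold badDeg
      apply Finset.sum_le_sum; intro i _
      simp only [b]
      split_ifs with h
      · exact le_rfl
      · exact_mod_cast hbad i h
    have hbX' : ∑ i, b i * d i = X := by
      rw [hXdef]; unfold badDeg
      apply Finset.sum_congr rfl; intro i _
      simp only [b]; split_ifs <;> simp
    have hpt : ∀ i j, |(if D i = k then (G i j : ℝ) * empSBcdf D (D j) else 0) -
        (if d i = k then (g i j : ℝ) * φ (d j) else 0)| ≤
        b i * ((if D i = k then (G i j : ℝ) else 0) + (if d i = k then (g i j : ℝ) else 0)) +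
        b j * g i j + (if d i = k then (g i j : ℝ) else 0) * (2 * (X / N) + ε) := by
      intro i j
      have hg0 : (0 : ℝ) ≤ g i j := Nat.cast_nonneg _
      have hG0 : (0 : ℝ) ≤ G i j := Nat.cast_nonneg _
      have hΔ : 0 ≤ 2 * (X / N) + ε := by linarith
      by_cases hi : D i = d i
      · have hGg : G i j = g i j := erase_eq_of_good d g hdeg i hi j
        have hbi : b i = 0 := by simp [b, hi]
        rw [hbi, zero_mul, zero_add, hi, hGg]
        by_cases hdk : d i = k
        · simp only [hdk, if_true]
          rw [← mul_sub, abs_mul, abs_of_nonneg hg0]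
          by_cases hj : D j = d j
          · have hbj : b j = 0 := by simp [b, hj]
            rw [hbj, zero_mul, zero_add, hj]
            exact mul_le_mul_of_nonneg_left (hFφ _) hg0
          · have hbj : b j = 1 := by simp [b, hj]
            rw [hbj, one_mul]
            have : |empSBcdf D (D j) - φ (d j)| ≤ 1 := by
              rw [abs_le]; constructor <;>
              linarith [hFh0 (D j), hFh1 (D j), hφ0 (d j), hφ1 (d j)]
            have h1 := mul_le_mul_of_nonneg_left this hg0
            have h2 := mul_nonneg hg0 hΔ
            linarith
        · simp only [hdk, if_false, sub_zero, abs_zero, zero_mul, add_zero]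
          exact mul_nonneg (hb0 j) hg0
      · have hbi : b i = 1 := by simp [b, hi]
        rw [hbi, one_mul]
        have h1 : 0 ≤ b j * g i j := mul_nonneg (hb0 j) hg0
        have h2 : 0 ≤ (if d i = k then (g i j : ℝ) else 0) * (2 * (X / N) + ε) := by
          apply mul_nonneg _ hΔ; split_ifs
          · exact hg0
          · exact le_rfl
        have h3 : |(if D i = k then (G i j : ℝ) * empSBcdf D (D j) else 0)| ≤
            (if D i = k then (G i j : ℝ) else 0) := by
          split_ifs
          · rw [abs_of_nonneg (mul_nonneg hG0 (hFh0 _))]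
            exact mul_le_of_le_one_right hG0 (hFh1 _)
          · simp
        have h4 : |(if d i = k then (g i j : ℝ) * φ (d j) else 0)| ≤
            (if d i = k then (g i j : ℝ) else 0) := by
          split_ifs
          · rw [abs_of_nonneg (mul_nonneg hg0 (hφ0 _))]
            exact mul_le_of_le_one_right hg0 (hφ1 _)
          · simp
        have h5 := abs_sub (if D i = k then (G i j : ℝ) * empSBcdf D (D j) else 0)
          (if d i = k then (g i j : ℝ) * φ (d j) else 0)
        linarith
    calc _ ≤ ∑ i, ∑ j, |(if D i = k then (G i j : ℝ) * empSBcdf D (D j) else 0) -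
        (if d i = k then (g i j : ℝ) * φ (d j) else 0)| :=
          (Finset.abs_sum_le_sum_abs _ _).trans
            (Finset.sum_le_sum fun i _ => Finset.abs_sum_le_sum_abs _ _)
      _ ≤ ∑ i, ∑ j, (b i * ((if D i = k then (G i j : ℝ) else 0) +
          (if d i = k then (g i j : ℝ) else 0)) +
        b j * g i j + (if d i = k then (g i j : ℝ) else 0) * (2 * (X / N) + ε)) :=
          Finset.sum_le_sum fun i _ => Finset.sum_le_sum fun j _ => hpt i j
      _ = (∑ i, b i * ((∑ j, if D i = k then (G i j : ℝ) else 0) +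
          ∑ j, if d i = k then (g i j : ℝ) else 0)) + (∑ i, ∑ j, b j * g i j) +
          (∑ i, ∑ j, if d i = k then (g i j : ℝ) else 0) * (2 * (X / N) + ε) := by
          simp only [Finset.sum_add_distrib, Finset.mul_sum, mul_add, Finset.sum_mul]
      _ ≤ 2 * k * X + X + k * N * (2 * (X / N) + ε) := by
          have e1 : ∀ i, (∑ j, if D i = k then (G i j : ℝ) else 0) ≤ k := by
            intro i; split_ifs with h
            · rw [hDegR, h]
            · simp
          have e2 : ∀ i, (∑ j, if d i = k then (g i j : ℝ) else 0) =
              k * (if d i = k then 1 else 0) := by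
            intro i; split_ifs with h
            · rw [hdegR, h]; simp
            · simp
          have e2' : ∀ i, (∑ j, if d i = k then (g i j : ℝ) else 0) ≤ k := by
            intro i; rw [e2]; split_ifs <;> simp
          have e3 : (∑ i, ∑ j, b j * (g i j : ℝ)) = X := by
            rw [Finset.sum_comm, ← hbX']
            apply Finset.sum_congr rfl; intro j _
            rw [← Finset.mul_sum, ← hdegR j]
            congr 1
            apply Finset.sum_congr rfl; intro i _; rw [hsym]
          have e4 : (∑ i, ∑ j, if d i = k then (g i j : ℝ) else 0) = k * N := by
            simp_rw [e2]; rw [← Finset.mul_sum, ← hN]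
          rw [e3, e4]
          have e5 : (∑ i, b i * ((∑ j, if D i = k then (G i j : ℝ) else 0) +
            ∑ j, if d i = k then (g i j : ℝ) else 0)) ≤ ∑ i, b i * (2 * k) :=
            Finset.sum_le_sum fun i _ => mul_le_mul_of_nonneg_left
              (by linarith [e1 i, e2' i]) (hb0 i)
          rw [← Finset.sum_mul] at e5
          have e6 : (∑ i, b i) * (2 * k) ≤ X * (2 * k) :=
            mul_le_mul_of_nonneg_right hbX (by positivity)
          linarith
      _ = _ := by ring
  rw [hANNR]
  have hkp : (0 : ℝ) < k := by linarith
  refine (ratio_bound B A _ _ hB0 hB1 (mul_pos hkp hNh0) (mul_pos hkp hN0)).trans ?_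
  have e1 : |(k : ℝ) * Nh - k * N| ≤ k * X := by
    rw [← mul_sub, abs_mul, abs_of_pos hkp]
    exact mul_le_mul_of_nonneg_left hNN hkp.le
  refine (div_le_div_of_nonneg_right (add_le_add hBA e1) (mul_pos hkp hN0).le).trans ?_
  have e2 : ((2 * k + 1) * X + k * N * (2 * (X / N) + ε) + k * X) / (k * N) =
      5 * (X / N) + ε + (1 / k) * (X / N) := by
    field_simp; ring
  rw [e2]
  have e3 : (1 / (k : ℝ)) * (X / N) ≤ 1 * (X / N) :=
    mul_le_mul_of_nonneg_right (by rw [div_le_one hkp]; exact hk') hXN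
  linarith

end det

lemma markov_matching {n : ℕ} (d : Fin n → ℕ) (P : Matching d → Prop) (h : PM (Stubs d) → ℝ)
    (h0 : ∀ σ, 0 ≤ h σ) (h1 : ∀ σ, P σ → 1 ≤ h σ) (b : ℝ)
    (hb : ∑ σ, h σ ≤ (Fintype.card (PM (Stubs d)) : ℝ) * b) :
    uniformMatching d {σ | P σ} ≤ ENNReal.ofReal b := by
  classical
  have hfin : Fintype (Matching d) := instFintypePM (Stubs d)
  have hcardeq : Nat.card (Matching d) = Fintype.card (PM (Stubs d)) :=
    Nat.card_eq_fintype_card (α := PM (Stubs d))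
  unfold uniformMatching
  rw [Measure.smul_apply, smul_eq_mul, hcardeq,
    Measure.count_apply (show @MeasurableSet (Matching d) ⊤ {σ | P σ} from trivial)]
  set C := Fintype.card (PM (Stubs d)) with hC
  let P' : PM (Stubs d) → Prop := P
  have hcount : (({σ | P' σ} : Set (PM (Stubs d))).encard : ℝ≥0∞) =
      ((Finset.univ.filter (fun σ : PM (Stubs d) => P' σ)).card : ℝ≥0∞) := by
    have : ({σ | P' σ} : Set (PM (Stubs d))) =
      ((Finset.univ.filter (fun σ : PM (Stubs d) => P' σ)) : Set (PM (Stubs d))) := by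
      ext; simp
    rw [this, Set.encard_coe_eq_coe_finsetCard]
    simp
  have hle : ((Finset.univ.filter (fun σ : PM (Stubs d) => P' σ)).card : ℝ) ≤ (C : ℝ) * b := by
    refine le_trans ?_ hb
    rw [Finset.card_filter]
    push_cast
    apply Finset.sum_le_sum
    intro σ _
    split_ifs with hp
    · exact h1 σ hp
    · exact h0 σ
  change (C : ℝ≥0∞)⁻¹ * (({σ | P' σ} : Set (PM (Stubs d))).encard : ℝ≥0∞) ≤ _
  rw [hcount]
  rcases Nat.eq_zero_or_pos C with hC0 | hC0
  · have : (Finset.univ.filter (fun σ : PM (Stubs d) => P' σ)).card = 0 := by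
      have := Finset.card_le_univ (Finset.univ.filter (fun σ : PM (Stubs d) => P' σ))
      omega
    rw [this]; simp
  · rw [mul_comm, ← div_eq_mul_inv]
    apply ENNReal.div_le_of_le_mul
    have : (0 : ℝ) < C := by exact_mod_cast hC0
    rw [← ENNReal.ofReal_natCast, ← ENNReal.ofReal_natCast C, ← ENNReal.ofReal_mul' this.le]
    apply ENNReal.ofReal_le_ofReal
    rw [mul_comm]; exact hle

lemma matching_bound {n : ℕ} (d : Fin n → ℕ) (k : ℕ) (hk : 1 ≤ k) (φ : ℕ → ℝ)
    (hφ0 : ∀ l, 0 ≤ φ l) (hφ1 : ∀ l, φ l ≤ 1) (ε c δ : ℝ) (hδ : 0 < δ) (hεδ : 4 * ε ≤ δ)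
    (hF : ∀ l, |empSBcdf d l - φ l| ≤ ε)
    (hc : |(∑ i, (d i : ℝ) * φ (d i)) / degSum d - c| ≤ ε)
    (N : ℝ) (hN : N = ∑ i, if d i = k then (1 : ℝ) else 0) (hN0 : 0 < N)
    (hL : 3 < degSum d) (M : ℕ) :
    uniformMatching d {σ | δ < (if 0 < empDens d k then
        |ANNR (eraseDeg (cmEdges d σ)) (erase (cmEdges d σ)) k - c| else 0)} ≤
    ENNReal.ofReal ((1 + 24 / δ) * ((n * ((M : ℝ) ^ 3 * (2 / ((degSum d : ℝ) - 1) +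
      (∑ j, (d j : ℝ) ^ 2) / (((degSum d : ℝ) - 1) * ((degSum d : ℝ) - 3)))) +
      tailDeg d M) / N) + 16 / δ ^ 2 * (1 / N + (1 / ((degSum d : ℝ) - 1) +
        4 / (((degSum d : ℝ) - 1) * ((degSum d : ℝ) - 3))))) := by
  have hkp : (1 : ℝ) ≤ k := by exact_mod_cast hk
  have hkp0 : (0 : ℝ) < k := by linarith
  have hL0 : (0 : ℝ) < (degSum d : ℝ) := by exact_mod_cast (by omega : 0 < degSum d)
  obtain ⟨a, ha⟩ : ∃ a : ℝ, a = (∑ i, (d i : ℝ) * φ (d i)) / degSum d := ⟨_, rfl⟩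
  have hbar : ∑ s : Stubs d, φ (d s.1) = degSum d * a := by
    rw [sum_stubs_vertex d (fun i => φ (d i)), ha]; field_simp
  have ha0 : 0 ≤ a := by
    rw [ha]
    exact div_nonneg (Finset.sum_nonneg fun i _ => mul_nonneg (Nat.cast_nonneg _) (hφ0 _)) hL0.le
  have ha1 : a ≤ 1 := by
    rw [ha, div_le_one hL0]; unfold degSum; push_cast
    exact Finset.sum_le_sum fun i _ => mul_le_of_le_one_right (Nat.cast_nonneg _) (hφ1 _)
  rw [← ha] at hc
  let K : Finset (Stubs d) := Finset.univ.filter (fun s => d s.1 = k)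
  have hKc : (K.card : ℝ) = k * N := by
    simp only [K]
    rw [Finset.card_filter]; push_cast
    rw [sum_stubs_vertex d (fun i => if d i = k then (1:ℝ) else 0), hN, Finset.mul_sum]
    apply Finset.sum_congr rfl; intro i _
    split_ifs with h
    · rw [h]
    · simp
  let ψ : Stubs d → ℝ := fun s => φ (d s.1) - a
  have hψ0 : ∑ s, ψ s = 0 := by
    simp only [ψ, Finset.sum_sub_distrib, hbar, Finset.sum_const, Finset.card_univ, card_stubs,
      nsmul_eq_mul, sub_self]
  have hψ1 : ∀ s, |ψ s| ≤ 1 := by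
    intro s; simp only [ψ]; rw [abs_le]; constructor <;> linarith [hφ0 (d s.1), hφ1 (d s.1)]
  have hsm := second_moment K ψ hψ0 hψ1 (by rw [card_stubs]; exact hL)
  rw [card_stubs, hKc] at hsm
  have hsb := sum_badDeg d M hL
  have hA : ∀ σ : Matching d, (∑ i, if d i = k then ∑ j, (cmEdges d σ i j : ℝ) * φ (d j) else 0)
      / (k * N) - a = (∑ s ∈ K, ψ (σ.1 s)) / (k * N) := by
    intro σ
    have e1 : (∑ i, if d i = k then ∑ j, (cmEdges d σ i j : ℝ) * φ (d j) else 0) =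
        ∑ s ∈ K, φ (d (σ.1 s).1) := by
      simp only [K]
      rw [Finset.sum_filter, Fintype.sum_sigma]
      apply Finset.sum_congr rfl; intro i _
      rw [cmEdges_sum d σ i (fun j => φ (d j))]
      split_ifs <;> simp
    rw [e1]
    simp only [ψ, Finset.sum_sub_distrib, Finset.sum_const, nsmul_eq_mul, hKc]
    field_simp
  have hbd0 : ∀ σ : Matching d, 0 ≤ badDeg d (cmEdges d σ) := by
    intro σ; unfold badDeg
    apply Finset.sum_nonneg; intro i _; split_ifs <;> simp
  refine markov_matching d _ (fun σ => (1 + 24 / δ) / N * badDeg d (cmEdges d σ) +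
    16 / δ ^ 2 / (k * N) ^ 2 * (∑ s ∈ K, ψ (σ.1 s)) ^ 2) ?_ ?_ _ ?_
  · intro σ
    have := hbd0 σ
    positivity
  · intro σ hσ
    have hen : 0 < empDens d k := by
      by_contra hcon
      rw [if_neg hcon] at hσ; linarith
    rw [if_pos hen] at hσ
    have hbd := hbd0 σ
    by_cases hX : badDeg d (cmEdges d σ) < N
    · have hdet := det_bound d (cmEdges d σ) (cmEdges_symm d σ) (cmEdges_deg d σ) k hk φ hφ0 hφ1
        ε hF N hN hX
      obtain ⟨A, hAdef⟩ : ∃ A, A = (∑ i, if d i = k then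
        ∑ j, (cmEdges d σ i j : ℝ) * φ (d j) else 0) / (k * N) := ⟨_, rfl⟩
      have hA' := hA σ
      rw [← hAdef] at hdet hA'
      obtain ⟨Θ, hΘ⟩ : ∃ Θ, Θ = ANNR (eraseDeg (cmEdges d σ)) (erase (cmEdges d σ)) k := ⟨_, rfl⟩
      rw [← hΘ] at hdet hσ
      obtain ⟨X, hXd⟩ : ∃ X, X = badDeg d (cmEdges d σ) := ⟨_, rfl⟩
      rw [← hXd] at hdet hbd
      have t1 := abs_sub_le Θ A c
      have t2 := abs_sub_le A a c
      have t3 : δ / 2 < 6 * (X / N) + |A - a| := by linarith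
      have e2 : 16 / δ ^ 2 / (k * N) ^ 2 * (∑ s ∈ K, ψ (σ.1 s)) ^ 2 = 16 / δ ^ 2 * |A - a| ^ 2 := by
        rw [hA', sq_abs, div_pow]; field_simp
      have e3 : (1 + 24 / δ) / N * X = X / N + 24 / δ * (X / N) := by ring
      simp only [← hXd]
      rw [e2, e3]
      have hXN : 0 ≤ X / N := by positivity
      by_cases h6 : δ / 4 ≤ 6 * (X / N)
      · have : 1 ≤ 24 / δ * (X / N) := by
          rw [div_mul_eq_mul_div, le_div_iff₀ hδ]; linarith
        have : 0 ≤ 16 / δ ^ 2 * |A - a| ^ 2 := by positivity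
        linarith
      · have h7 : δ / 4 ≤ |A - a| := by linarith
        have h8 : (δ / 4) ^ 2 ≤ |A - a| ^ 2 := by gcongr
        have : 1 ≤ 16 / δ ^ 2 * |A - a| ^ 2 := by
          rw [div_mul_eq_mul_div, le_div_iff₀ (by positivity)]; nlinarith
        have : 0 ≤ 24 / δ * (X / N) := by positivity
        linarith
    · push Not at hX
      have h1 : 1 ≤ badDeg d (cmEdges d σ) / N := by rw [le_div_iff₀ hN0]; linarith
      have e3 : (1 + 24 / δ) / N * badDeg d (cmEdges d σ) = badDeg d (cmEdges d σ) / N +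
        24 / δ * (badDeg d (cmEdges d σ) / N) := by ring
      have : 0 ≤ 16 / δ ^ 2 / (k * N) ^ 2 * (∑ s ∈ K, ψ (σ.1 s)) ^ 2 := by positivity
      have : 0 ≤ 24 / δ * (badDeg d (cmEdges d σ) / N) := by positivity
      rw [e3]
      linarith
  · rw [Finset.sum_add_distrib, ← Finset.mul_sum, ← Finset.mul_sum]
    have i1 := mul_le_mul_of_nonneg_left hsb (show 0 ≤ (1 + 24 / δ) / N by positivity)
    have i2 := mul_le_mul_of_nonneg_left hsm (show 0 ≤ 16 / δ ^ 2 / (k * N) ^ 2 by positivity)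
    refine (add_le_add i1 i2).trans ?_
    obtain ⟨R, hR⟩ : ∃ R, R = (1 / ((degSum d : ℝ) - 1) +
        4 / (((degSum d : ℝ) - 1) * ((degSum d : ℝ) - 3))) := ⟨_, rfl⟩
    rw [← hR]
    obtain ⟨C, hC⟩ : ∃ C : ℝ, C = (Fintype.card (PM (Stubs d)) : ℝ) := ⟨_, rfl⟩
    have hC0 : 0 ≤ C := by rw [hC]; positivity
    rw [← hC]
    have e5 : 16 / δ ^ 2 / (k * N) ^ 2 * (C * (k * N + (k * N) ^ 2 * R)) =
      C * (16 / δ ^ 2 * (1 / (k * N) + R)) := by field_simp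
    rw [e5]
    have e6 : 1 / (k * N) ≤ 1 / N := by
      apply one_div_le_one_div_of_le hN0
      nlinarith
    have e7 : C * (16 / δ ^ 2 * (1 / (k * N) + R)) ≤ C * (16 / δ ^ 2 * (1 / N + R)) := by
      gcongr
    refine (add_le_add_right e7 _).trans (le_of_eq ?_)
    ring

lemma sum_by_degree {n : ℕ} (d : Fin n → ℕ) (M : ℕ) (w : ℕ → ℝ) :
    ∑ i, (if d i ≤ M then w (d i) else 0) =
      ∑ l ∈ Finset.range (M + 1), w l * ∑ i, (if d i = l then (1 : ℝ) else 0) := by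
  simp_rw [Finset.mul_sum]
  rw [Finset.sum_comm]
  apply Finset.sum_congr rfl; intro i _
  simp

lemma tailDeg_eq {n : ℕ} (d : Fin n → ℕ) (M : ℕ) :
    tailDeg d M / n = (degSum d : ℝ) / n -
      ∑ l ∈ Finset.range (M + 1), (l : ℝ) * empDens d l := by
  unfold empDens
  simp_rw [← mul_div_assoc]
  rw [← Finset.sum_div, ← sub_div, ← sum_by_degree d M (fun l => (l : ℝ))]
  unfold tailDeg degSum
  push_cast
  rw [← Finset.sum_sub_distrib]
  congr 1
  apply Finset.sum_congr rfl; intro i _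
  by_cases h : d i ≤ M
  · simp [h, not_lt.2 h]
  · simp [h, not_le.1 h]

lemma tailDeg_nonneg {n : ℕ} (d : Fin n → ℕ) (M : ℕ) : 0 ≤ tailDeg d M := by
  unfold tailDeg
  apply Finset.sum_nonneg; intro i _; split_ifs <;> simp

lemma sq_bound {n : ℕ} (d : Fin n → ℕ) (M : ℕ) :
    ∑ i, (d i : ℝ) ^ 2 ≤ ((M : ℝ) + tailDeg d M) * degSum d := by
  unfold degSum; push_cast
  rw [Finset.mul_sum]
  apply Finset.sum_le_sum; intro i _
  rw [sq]
  apply mul_le_mul_of_nonneg_right _ (Nat.cast_nonneg _)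
  by_cases h : d i ≤ M
  · have : (d i : ℝ) ≤ M := by exact_mod_cast h
    linarith [tailDeg_nonneg d M]
  · have : (d i : ℝ) ≤ tailDeg d M := by
      unfold tailDeg
      have := Finset.single_le_sum (f := fun i => if M < d i then (d i : ℝ) else 0)
        (fun i _ => by split_ifs <;> simp) (Finset.mem_univ i)
      simpa [not_le.1 h] using this
    have : (0 : ℝ) ≤ M := Nat.cast_nonneg _
    linarith

lemma weight_bound {n : ℕ} (d : Fin n → ℕ) (hL : 0 < degSum d) (g : ℕ → ℝ) (hg0 : ∀ l, 0 ≤ g l)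
    (hg : HasSum g 1) (w : ℕ → ℝ) (hw0 : ∀ l, 0 ≤ w l) (hw1 : ∀ l, w l ≤ 1) (M : ℕ) :
    |(∑ i, (d i : ℝ) * w (d i)) / degSum d - ∑' l, g l * w l| ≤
      ∑ l ∈ Finset.range (M + 1), |empSB d l - g l| + tailDeg d M / degSum d +
        (1 - ∑ l ∈ Finset.range (M + 1), g l) := by
  have hL0 : (0 : ℝ) < degSum d := by exact_mod_cast hL
  have hs : Summable (fun l => g l * w l) :=
    Summable.of_nonneg_of_le (fun l => mul_nonneg (hg0 l) (hw0 l))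
      (fun l => mul_le_of_le_one_right (hg0 l) (hw1 l)) hg.summable
  have e1 := hs.sum_add_tsum_nat_add (M + 1)
  have e2 := hg.summable.sum_add_tsum_nat_add (M + 1)
  rw [hg.tsum_eq] at e2
  have e3 : ∑' i, g (i + (M + 1)) * w (i + (M + 1)) ≤ ∑' i, g (i + (M + 1)) :=
    Summable.tsum_le_tsum (fun l => mul_le_of_le_one_right (hg0 _) (hw1 _))
      ((summable_nat_add_iff (M + 1)).2 hs) ((summable_nat_add_iff (M + 1)).2 hg.summable)
  have e4 : 0 ≤ ∑' i, g (i + (M + 1)) * w (i + (M + 1)) :=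
    tsum_nonneg fun i => mul_nonneg (hg0 _) (hw0 _)
  have e5 : (∑ i, (d i : ℝ) * w (d i)) =
      (∑ i, if d i ≤ M then (d i : ℝ) * w (d i) else 0) +
      ∑ i, if M < d i then (d i : ℝ) * w (d i) else 0 := by
    rw [← Finset.sum_add_distrib]
    apply Finset.sum_congr rfl; intro i _
    by_cases h : d i ≤ M
    · simp [h, not_lt.2 h]
    · simp [h, not_le.1 h]
  have e6 : 0 ≤ ∑ i, if M < d i then (d i : ℝ) * w (d i) else 0 :=
    Finset.sum_nonneg fun i _ => by
      split_ifs
      · exact mul_nonneg (Nat.cast_nonneg _) (hw0 _)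
      · exact le_rfl
  have e7 : (∑ i, if M < d i then (d i : ℝ) * w (d i) else 0) ≤ tailDeg d M := by
    unfold tailDeg
    apply Finset.sum_le_sum; intro i _
    split_ifs
    · exact mul_le_of_le_one_right (Nat.cast_nonneg _) (hw1 _)
    · exact le_rfl
  have e8 : (∑ i, if d i ≤ M then (d i : ℝ) * w (d i) else 0) / degSum d =
      ∑ l ∈ Finset.range (M + 1), empSB d l * w l := by
    rw [sum_by_degree d M (fun l => (l : ℝ) * w l), Finset.sum_div]
    apply Finset.sum_congr rfl; intro l _
    unfold empSB
    have : (∑ i, if d i = l then (l : ℝ) else 0) = l * ∑ i, if d i = l then (1 : ℝ) else 0 := by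
      rw [Finset.mul_sum]; apply Finset.sum_congr rfl; intro i _; split_ifs <;> simp
    rw [this]; ring
  have e9 : |∑ l ∈ Finset.range (M + 1), empSB d l * w l - ∑ l ∈ Finset.range (M + 1), g l * w l|
      ≤ ∑ l ∈ Finset.range (M + 1), |empSB d l - g l| := by
    rw [← Finset.sum_sub_distrib]
    refine (Finset.abs_sum_le_sum_abs _ _).trans (Finset.sum_le_sum fun l _ => ?_)
    rw [← sub_mul, abs_mul, abs_of_nonneg (hw0 l)]
    exact mul_le_of_le_one_right (abs_nonneg _) (hw1 l)
  rw [e5, add_div, e8, ← e1]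
  have e10 := div_le_div_of_nonneg_right e7 hL0.le
  have e11 := div_nonneg e6 hL0.le
  have e12 := abs_le.1 e9
  rw [abs_le]
  constructor <;> linarith [e12.1, e12.2]

lemma main_seq (d : (n : ℕ) → Fin n → ℕ) (f : ℕ → ℝ) (hf0 : ∀ l, 0 ≤ f l) (μ : ℝ) (hμ : 0 < μ)
    (hsum : HasSum (fun l : ℕ => (l : ℝ) * f l) μ)
    (hemp : ∀ l, Tendsto (fun n => empDens (d n) l) atTop (nhds (f l)))
    (hdeg : Tendsto (fun n => (degSum (d n) : ℝ) / n) atTop (nhds μ))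
    (k : ℕ) (hk : 1 ≤ k) (hfk : 0 < f k) (δ : ℝ) (hδ : 0 < δ) :
    Tendsto (fun n => uniformMatching (d n) {σ | δ < (if 0 < empDens (d n) k then
        |ANNR (eraseDeg (cmEdges (d n) σ)) (erase (cmEdges (d n) σ)) k -
          ∑' j : ℕ, sizeBiased f j * cdfOf (sizeBiased f) j| else 0)}) atTop (nhds 0) := by
  have hmean : meanPMF f = μ := hsum.tsum_eq
  have hg0 : ∀ l, 0 ≤ sizeBiased f l := fun l => by
    unfold sizeBiased; rw [hmean]
    exact div_nonneg (mul_nonneg (Nat.cast_nonneg _) (hf0 l)) hμ.le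
  have hg : HasSum (sizeBiased f) 1 := by
    have := hsum.div_const μ
    rw [div_self hμ.ne'] at this
    unfold sizeBiased; rw [hmean]; exact this
  set g := sizeBiased f with hgdef
  have hφ0 : ∀ l, 0 ≤ cdfOf g l := fun l => Finset.sum_nonneg fun j _ => hg0 j
  have hφ1 : ∀ l, cdfOf g l ≤ 1 := fun l => sum_le_hasSum _ (fun j _ => hg0 j) hg
  -- basic limits
  have hninv : Tendsto (fun n : ℕ => (1 : ℝ) / n) atTop (nhds 0) := tendsto_one_div_atTop_nhds_zero_nat
  have htail : ∀ M, Tendsto (fun n => tailDeg (d n) M / n) atTop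
      (nhds (μ - ∑ l ∈ Finset.range (M + 1), (l : ℝ) * f l)) := by
    intro M
    simp_rw [tailDeg_eq]
    exact hdeg.sub (tendsto_finsetSum _ fun l _ => (hemp l).const_mul _)
  have hτ : Tendsto (fun M : ℕ => μ - ∑ l ∈ Finset.range (M + 1), (l : ℝ) * f l) atTop (nhds 0) := by
    have := (hsum.tendsto_sum_nat.comp (tendsto_add_atTop_nat 1)).const_sub μ
    simpa using this
  have hτg : Tendsto (fun M : ℕ => 1 - ∑ l ∈ Finset.range (M + 1), g l) atTop (nhds 0) := by
    have := (hg.tendsto_sum_nat.comp (tendsto_add_atTop_nat 1)).const_sub 1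
    simpa using this
  have hLtop : Tendsto (fun n => (degSum (d n) : ℝ)) atTop atTop := by
    have h1 : Tendsto (fun n : ℕ => (degSum (d n) : ℝ) / n * n) atTop atTop :=
      hdeg.pos_mul_atTop hμ tendsto_natCast_atTop_atTop
    refine h1.congr' ?_
    filter_upwards [eventually_gt_atTop 0] with n hn
    have : (n : ℝ) ≠ 0 := by positivity
    field_simp
  have hL3 : ∀ᶠ n in atTop, 3 < degSum (d n) := by
    filter_upwards [hLtop.eventually_gt_atTop 3] with n hn
    exact_mod_cast hn
  have hempSB : ∀ l, Tendsto (fun n => empSB (d n) l) atTop (nhds (g l)) := by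
    intro l
    have h1 := ((hemp l).const_mul (l : ℝ)).div hdeg hμ.ne'
    have h2 : (l : ℝ) * f l / μ = g l := by rw [hgdef]; unfold sizeBiased; rw [hmean]
    rw [h2] at h1
    refine h1.congr' ?_
    filter_upwards [eventually_gt_atTop 0] with n hn
    have hn' : (n : ℝ) ≠ 0 := by positivity
    unfold empSB empDens
    have : (∑ i, if d n i = l then (l : ℝ) else 0) = l * ∑ i, if d n i = l then (1 : ℝ) else 0 := by
      rw [Finset.mul_sum]; apply Finset.sum_congr rfl; intro i _; split_ifs <;> simp
    rw [this]
    simp only [Pi.div_apply]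
    rw [← mul_div_assoc, div_div_div_cancel_right₀ hn']
  have htailL : ∀ M, Tendsto (fun n => tailDeg (d n) M / degSum (d n)) atTop
      (nhds ((μ - ∑ l ∈ Finset.range (M + 1), (l : ℝ) * f l) / μ)) := by
    intro M
    refine ((htail M).div hdeg hμ.ne').congr' ?_
    filter_upwards [eventually_gt_atTop 0] with n hn
    have hn' : (n : ℝ) ≠ 0 := by positivity
    simp only [Pi.div_apply]
    rw [div_div_div_cancel_right₀ hn']
  -- uniform convergence of weighted averages
  have hw : ∀ ε > 0, ∀ᶠ n in atTop, ∀ w : ℕ → ℝ, (∀ l, 0 ≤ w l) → (∀ l, w l ≤ 1) →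
      |(∑ i, (d n i : ℝ) * w (d n i)) / degSum (d n) - ∑' l, g l * w l| ≤ ε := by
    intro ε hε
    have hlim : Tendsto (fun M : ℕ => (μ - ∑ l ∈ Finset.range (M + 1), (l : ℝ) * f l) / μ +
        (1 - ∑ l ∈ Finset.range (M + 1), g l)) atTop (nhds 0) := by
      simpa using (hτ.div_const μ).add hτg
    obtain ⟨M, hM⟩ := (hlim.eventually_lt_const hε).exists
    have hn : Tendsto (fun n => ∑ l ∈ Finset.range (M + 1), |empSB (d n) l - g l| +
        tailDeg (d n) M / degSum (d n) + (1 - ∑ l ∈ Finset.range (M + 1), g l)) atTop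
        (nhds ((μ - ∑ l ∈ Finset.range (M + 1), (l : ℝ) * f l) / μ +
        (1 - ∑ l ∈ Finset.range (M + 1), g l))) := by
      have h1 : Tendsto (fun n => ∑ l ∈ Finset.range (M + 1), |empSB (d n) l - g l|) atTop
          (nhds 0) := by
        have := tendsto_finsetSum (Finset.range (M + 1))
          (fun l _ => ((hempSB l).sub_const (g l)).abs)
        simpa using this
      simpa using (h1.add (htailL M)).add_const (1 - ∑ l ∈ Finset.range (M + 1), g l)
    filter_upwards [hn.eventually_lt_const hM, hL3] with n h1 h2 w hw0 hw1
    exact (weight_bound (d n) (by omega) g hg0 hg w hw0 hw1 M).trans h1.le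
  -- second moment of degrees
  have hQ : Tendsto (fun n : ℕ => (∑ j, (d n j : ℝ) ^ 2) / (n : ℝ) ^ 2) atTop (nhds 0) := by
    rw [tendsto_order]
    constructor
    · intro a ha
      filter_upwards with n
      exact ha.trans_le (div_nonneg (Finset.sum_nonneg fun j _ => by positivity) (by positivity))
    · intro ε hε
      have h1 := hτ.mul_const μ
      rw [zero_mul] at h1
      obtain ⟨M, hM⟩ := (h1.eventually_lt_const hε).exists
      have h2 := ((hninv.const_mul (M : ℝ)).add (htail M)).mul hdeg
      rw [mul_zero, zero_add] at h2
      filter_upwards [h2.eventually_lt_const hM, eventually_gt_atTop 0] with n hn hn0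
      have hn' : (0 : ℝ) < n := by exact_mod_cast hn0
      refine lt_of_le_of_lt ?_ hn
      rw [div_le_iff₀ (by positivity)]
      refine (sq_bound (d n) M).trans (le_of_eq ?_)
      field_simp
  have hL1 : Tendsto (fun n : ℕ => ((degSum (d n) : ℝ) - 1) / n) atTop (nhds μ) := by
    have := hdeg.sub hninv
    rw [sub_zero] at this
    refine this.congr fun n => ?_
    ring
  have hL3' : Tendsto (fun n : ℕ => ((degSum (d n) : ℝ) - 3) / n) atTop (nhds μ) := by
    have := hdeg.sub (hninv.const_mul 3)
    rw [mul_zero, sub_zero] at this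
    refine this.congr fun n => ?_
    ring
  have hinvL1 : Tendsto (fun n : ℕ => 1 / ((degSum (d n) : ℝ) - 1)) atTop (nhds 0) := by
    have := hninv.div hL1 hμ.ne'
    rw [zero_div] at this
    refine this.congr' ?_
    filter_upwards [eventually_gt_atTop 0] with n hn
    have hn' : (n : ℝ) ≠ 0 := by positivity
    simp only [Pi.div_apply]
    rw [div_div_div_cancel_right₀ hn']
  have hinvL13 : Tendsto (fun n : ℕ => 1 / (((degSum (d n) : ℝ) - 1) * ((degSum (d n) : ℝ) - 3)))
      atTop (nhds 0) := by
    have := (hninv.mul hninv).div (hL1.mul hL3') (mul_pos hμ hμ).ne'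
    rw [zero_mul, zero_div] at this
    refine this.congr' ?_
    filter_upwards [eventually_gt_atTop 0] with n hn
    have hn' : (n : ℝ) ≠ 0 := by positivity
    simp only [Pi.div_apply]
    rw [div_mul_div_comm, div_mul_div_comm, div_div_div_cancel_right₀ (mul_ne_zero hn' hn'), one_mul]
  have hQL : Tendsto (fun n : ℕ => (∑ j, (d n j : ℝ) ^ 2) /
      (((degSum (d n) : ℝ) - 1) * ((degSum (d n) : ℝ) - 3))) atTop (nhds 0) := by
    have := hQ.div (hL1.mul hL3') (mul_pos hμ hμ).ne'
    rw [zero_div] at this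
    refine this.congr' ?_
    filter_upwards [eventually_gt_atTop 0] with n hn
    have hn' : (n : ℝ) ≠ 0 := by positivity
    simp only [Pi.div_apply]
    rw [div_mul_div_comm, sq (n : ℝ), div_div_div_cancel_right₀ (mul_ne_zero hn' hn')]
  have hr : Tendsto (fun n : ℕ => 2 / ((degSum (d n) : ℝ) - 1) + (∑ j, (d n j : ℝ) ^ 2) /
      (((degSum (d n) : ℝ) - 1) * ((degSum (d n) : ℝ) - 3))) atTop (nhds 0) := by
    have := (hinvL1.const_mul 2).add hQL
    rw [mul_zero, add_zero] at this
    refine this.congr fun n => ?_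
    ring
  -- number of nodes of degree `k`
  let Nn : ℕ → ℝ := fun n => ∑ i, if d n i = k then (1 : ℝ) else 0
  have hNn : Tendsto (fun n => Nn n / n) atTop (nhds (f k)) := hemp k
  have hNpos : ∀ᶠ n in atTop, 0 < Nn n := by
    filter_upwards [hNn.eventually_const_lt hfk, eventually_gt_atTop 0] with n h1 h2
    have hn' : (0 : ℝ) < n := by exact_mod_cast h2
    by_contra hc
    have := div_nonpos_of_nonpos_of_nonneg (not_lt.1 hc) hn'.le
    linarith
  have hinvN : Tendsto (fun n => 1 / Nn n) atTop (nhds 0) := by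
    have := hninv.div hNn hfk.ne'
    rw [zero_div] at this
    refine this.congr' ?_
    filter_upwards [eventually_gt_atTop 0] with n hn
    have hn' : (n : ℝ) ≠ 0 := by positivity
    simp only [Pi.div_apply]
    rw [div_div_div_cancel_right₀ hn']
  have hbound : ∀ M : ℕ, Tendsto (fun n : ℕ => (1 + 24 / δ) * ((n * ((M : ℝ) ^ 3 *
      (2 / ((degSum (d n) : ℝ) - 1) +
      (∑ j, (d n j : ℝ) ^ 2) / (((degSum (d n) : ℝ) - 1) * ((degSum (d n) : ℝ) - 3)))) +
      tailDeg (d n) M) / Nn n) + 16 / δ ^ 2 * (1 / Nn n + (1 / ((degSum (d n) : ℝ) - 1) +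
        4 / (((degSum (d n) : ℝ) - 1) * ((degSum (d n) : ℝ) - 3))))) atTop
      (nhds ((1 + 24 / δ) * ((μ - ∑ l ∈ Finset.range (M + 1), (l : ℝ) * f l) / f k))) := by
    intro M
    have h1 := (((hr.const_mul ((M : ℝ) ^ 3)).add (htail M)).div hNn hfk.ne').const_mul (1 + 24 / δ)
    have h2 := (hinvN.add (hinvL1.add (hinvL13.const_mul 4))).const_mul (16 / δ ^ 2)
    have h3 := h1.add h2
    simp only [mul_zero, zero_add, add_zero] at h3
    refine h3.congr' ?_
    filter_upwards [eventually_gt_atTop 0] with n hn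
    have hn' : (n : ℝ) ≠ 0 := by positivity
    simp only [Pi.div_apply]
    congr 1
    · congr 1
      rw [← div_div_div_cancel_right₀ hn' _ (Nn n)]
      congr 1
      rw [add_div, mul_div_cancel_left₀ _ hn']
    · ring
  rw [ENNReal.tendsto_nhds_zero]
  intro ε hε
  obtain ⟨ε', hε'0, hε'⟩ : ∃ ε' : ℝ, 0 < ε' ∧ ENNReal.ofReal ε' ≤ ε := by
    rcases eq_or_ne ε ⊤ with h | h
    · exact ⟨1, one_pos, by rw [h]; exact le_top⟩
    · exact ⟨ε.toReal, ENNReal.toReal_pos hε.ne' h, by rw [ENNReal.ofReal_toReal h]⟩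
  have hlimM := (hτ.div_const (f k)).const_mul (1 + 24 / δ)
  rw [zero_div, mul_zero] at hlimM
  obtain ⟨M, hM⟩ := (hlimM.eventually_lt_const hε'0).exists
  filter_upwards [(hbound M).eventually_lt_const hM, hNpos, hL3, hw (δ / 4) (by positivity)]
    with n hn1 hn2 hn3 hn4
  refine le_trans ?_ ((ENNReal.ofReal_le_ofReal hn1.le).trans hε')
  refine matching_bound (d n) k hk (cdfOf g) hφ0 hφ1 (δ / 4) _ δ hδ (by linarith) ?_
    (hn4 _ hφ0 hφ1) (Nn n) rfl hn2 hn3 M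
  intro l
  have := hn4 (fun j => if j ≤ l then 1 else 0) (fun j => by split_ifs <;> simp)
    (fun j => by split_ifs <;> simp)
  have e1 : ∑' j, g j * (if j ≤ l then (1 : ℝ) else 0) = cdfOf g l := by
    unfold cdfOf
    rw [tsum_eq_sum (s := Finset.range (l + 1))]
    · apply Finset.sum_congr rfl; intro j hj
      rw [if_pos (Nat.lt_succ_iff.1 (Finset.mem_range.1 hj)), mul_one]
    · intro j hj
      rw [if_neg, mul_zero]
      intro h; exact hj (Finset.mem_range.2 (Nat.lt_succ_iff.2 h))
  rw [e1] at this
  convert this using 3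
  unfold empSBcdf
  congr 1
  apply Finset.sum_congr rfl; intro i _
  split_ifs <;> simp

lemma parity_diff (n : ℕ) (x : Fin n → ℕ) (F : ℕ → ℝ) (hF : ∀ m, |F (m + 1) - F m| ≤ 1) :
    |(∑ i, F (parityFix n x i)) - ∑ i, F (x i)| ≤ 1 := by
  rw [← Finset.sum_sub_distrib]
  refine (Finset.abs_sum_le_sum_abs _ _).trans ?_
  have h1 : ∀ i : Fin n, |F (parityFix n x i) - F (x i)| ≤ if (i : ℕ) = n - 1 then (1 : ℝ) else 0 := by
    intro i
    unfold parityFix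
    by_cases h : (i : ℕ) = n - 1
    · rw [if_pos h]
      split_ifs
      · exact hF _
      · simp
    · simp [h]
  refine (Finset.sum_le_sum fun i _ => h1 i).trans ?_
  rw [Finset.sum_boole]
  have : (Finset.univ.filter (fun i : Fin n => (i : ℕ) = n - 1)).card ≤ 1 := by
    rw [Finset.card_le_one]
    intro a ha b hb
    simp only [Finset.mem_filter, Finset.mem_univ, true_and] at ha hb
    exact Fin.ext (ha.trans hb.symm)
  exact_mod_cast this

lemma parity_tendsto (x : ℕ → ℕ) (F : ℕ → ℝ) (hF : ∀ m, |F (m + 1) - F m| ≤ 1) (c : ℝ)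
    (h : Tendsto (fun n : ℕ => (∑ i ∈ Finset.range n, F (x i)) / n) atTop (nhds c)) :
    Tendsto (fun n : ℕ => (∑ i, F (parityFix n (fun i : Fin n => x i) i)) / n) atTop (nhds c) := by
  have h0 : Tendsto (fun n : ℕ => ((∑ i, F (parityFix n (fun i : Fin n => x i) i)) -
      ∑ i ∈ Finset.range n, F (x i)) / n) atTop (nhds 0) := by
    apply squeeze_zero_norm (a := fun n : ℕ => (1 : ℝ) / n) _ tendsto_one_div_atTop_nhds_zero_nat
    intro n
    rw [Real.norm_eq_abs, abs_div, Nat.abs_cast]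
    apply div_le_div_of_nonneg_right _ (Nat.cast_nonneg _)
    have := parity_diff n (fun i : Fin n => x i) F hF
    rwa [Fin.sum_univ_eq_sum_range (fun i => F (x i)) n] at this
  have := h.add h0
  rw [add_zero] at this
  refine this.congr fun n => ?_
  ring

lemma slln_gen {Ω : Type} [MeasurableSpace Ω] (P : Measure Ω) [IsProbabilityMeasure P]
    (ν : Measure ℕ) (X : ℕ → Ω → ℕ) (hmp : ∀ i, MeasurePreserving (X i) P ν)
    (h : ℕ → ℝ) (hi : Integrable h ν)
    (hind : ProbabilityTheory.iIndepFun (fun i ω => h (X i ω)) P) :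
    ∀ᵐ ω ∂P,
      Tendsto (fun n : ℕ => (∑ i ∈ Finset.range n, h (X i ω)) / n) atTop (nhds (∫ x, h x ∂ν)) := by
  have hm : Measurable h := measurable_of_countable h
  have hintg : ∫ ω, h (X 0 ω) ∂P = ∫ x, h x ∂ν := by
    have := integral_map (μ := P) (φ := X 0) (f := h)
      (hmp 0).measurable.aemeasurable hm.aestronglyMeasurable
    rw [(hmp 0).map_eq] at this
    exact this.symm
  rw [← hintg]
  refine ProbabilityTheory.strong_law_ae_real (fun i ω => h (X i ω)) ?_ ?_ ?_
  · exact (hmp 0).integrable_comp_of_integrable hi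
  · intro i j hij
    exact hind.indepFun hij
  · intro i
    have : ∀ j : ℕ, Measurable (fun ω : Ω => h (X j ω)) :=
      fun j => hm.comp (hmp j).measurable
    refine ⟨(this i).aemeasurable, (this 0).aemeasurable, ?_⟩
    have key : ∀ j, Measure.map (fun ω : Ω => h (X j ω)) P =
        Measure.map h ν := by
      intro j
      rw [← (hmp j).map_eq, Measure.map_map hm (hmp j).measurable]
      rfl
    rw [key, key]

lemma slln (ν : Measure ℕ) [IsProbabilityMeasure ν] (h : ℕ → ℝ) (hi : Integrable h ν) :
    ∀ᵐ ω ∂(Measure.infinitePi fun _ : ℕ => ν),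
      Tendsto (fun n : ℕ => (∑ i ∈ Finset.range n, h (ω i)) / n) atTop (nhds (∫ x, h x ∂ν)) :=
  slln_gen (Measure.infinitePi fun _ : ℕ => ν) ν (fun i ω => ω i)
    (fun i => measurePreserving_eval_infinitePi (fun _ : ℕ => ν) i) h hi
    (ProbabilityTheory.iIndepFun_infinitePi (P := fun _ : ℕ => ν) (X := fun _ => h)
      (fun _ => measurable_of_countable h))

lemma meas_restrict (n : ℕ) : Measurable (fun (ω : ℕ → ℕ) (i : Fin n) => ω i) :=
  measurable_pi_lambda _ fun i => measurable_pi_apply _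

lemma uniformMatching_le_one {n : ℕ} (d : Fin n → ℕ) (s : Set (Matching d)) :
    uniformMatching d s ≤ 1 := by
  have := markov_matching d (fun σ => σ ∈ s) (fun _ => 1) (by simp) (by simp) 1 (by simp)
  simpa using this

lemma iidLaw_eq (n : ℕ) (ν : Measure ℕ) [IsProbabilityMeasure ν] :
    iidLaw n ν = Measure.map (fun ω : ℕ → ℕ => parityFix n (fun i : Fin n => ω i))
      (Measure.infinitePi fun _ : ℕ => ν) := by
  unfold iidLaw
  have h1 : Measure.map (fun (ω : ℕ → ℕ) (i : Fin n) => ω i) (Measure.infinitePi fun _ : ℕ => ν) =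
      Measure.pi fun _ : Fin n => ν := by
    have hind := (ProbabilityTheory.iIndepFun_infinitePi (P := fun _ : ℕ => ν)
      (X := fun _ x => x) (fun _ => measurable_id)).precomp (g := fun i : Fin n => (i : ℕ))
      Fin.val_injective
    rw [ProbabilityTheory.iIndepFun_iff_map_fun_eq_pi_map
      (fun i => (measurable_pi_apply _).aemeasurable)] at hind
    rw [hind]
    congr 1
    funext i
    exact (measurePreserving_eval_infinitePi (fun _ : ℕ => ν) (i : ℕ)).map_eq
  rw [← h1, Measure.map_map (measurable_of_countable _) (meas_restrict n)]
  rfl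

lemma cmLaw_apply (n : ℕ) (ν : Measure ℕ) [IsProbabilityMeasure ν]
    (s : Set ((Fin n → ℕ) × (Fin n → Fin n → ℕ))) :
    cmLaw n ν s = ∫⁻ ω, uniformMatching (parityFix n (fun i : Fin n => ω i))
      {σ | (parityFix n (fun i : Fin n => ω i),
        cmEdges (parityFix n (fun i : Fin n => ω i)) σ) ∈ s}
      ∂(Measure.infinitePi fun _ : ℕ => ν) := by
  unfold cmLaw
  have hs : MeasurableSet s := s.to_countable.measurableSet
  rw [Measure.bind_apply hs (measurable_of_countable _).aemeasurable, iidLaw_eq,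
    lintegral_map (measurable_of_countable _)]
  · apply lintegral_congr
    intro ω
    rw [Measure.map_apply _ hs]
    · rfl
    · intro t _
      trivial
  · exact (measurable_of_countable (parityFix n)).comp (meas_restrict n)

/-- Convergence of the ANNR in the erased configuration model: for `𝒟`
regularly varying with exponent `γ > 1`, any `δ > 0` and any `k` with `f^*(k) > 0`,
`P(|Θ̂_n(k) − E[F^*(𝒟^*)]| 1{f_n(k) > 0} > δ) → 0`, where `f_n` is the empirical density
of the pre-erasure degrees. -/
theorem stmt13 (ν : Measure ℕ) [IsProbabilityMeasure ν] (f : ℕ → ℝ)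
    (hf : ∀ k, f k = (ν {k}).toReal) (hzero : ν {0} = 0)
    (γ : ℝ) (hγ : 1 < γ)
    (l : ℝ → ℝ) (hsv : SlowlyVarying l) (hmono : EventuallyMonotone l)
    (hreg : ∀ k : ℕ, 1 ≤ k → f k = l k * (k : ℝ) ^ (-γ - 1))
    (k : ℕ) (hk : 0 < sizeBiased f k)
    (δ : ℝ) (hδ : 0 < δ) :
    Tendsto (fun n : ℕ =>
        ((cmLaw n ν) {p : (Fin n → ℕ) × (Fin n → Fin n → ℕ) |
            δ < (if 0 < empDens p.1 k then
                |ANNR (eraseDeg p.2) (erase p.2) k -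
                  ∑' j : ℕ, sizeBiased f j * cdfOf (sizeBiased f) j|
              else 0)}).toReal)
      atTop (nhds 0) := by
  have hmean : 0 < meanPMF f ∧ 1 ≤ k ∧ 0 < f k := by
    have hf0 : ∀ l, 0 ≤ f l := fun l => by rw [hf]; exact ENNReal.toReal_nonneg
    have hm0 : 0 ≤ meanPMF f := tsum_nonneg fun l => mul_nonneg (Nat.cast_nonneg _) (hf0 l)
    unfold sizeBiased at hk
    refine ⟨lt_of_le_of_ne hm0 ?_, ?_, lt_of_le_of_ne (hf0 k) ?_⟩
    · intro h; rw [← h] at hk; simp at hk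
    · by_contra h
      have : k = 0 := by omega
      rw [this] at hk; simp at hk
    · intro h; rw [← h] at hk; simp at hk
  obtain ⟨hμ, hk1, hfk⟩ := hmean
  have hf0 : ∀ l, 0 ≤ f l := fun l => by rw [hf]; exact ENNReal.toReal_nonneg
  have hsummable : Summable (fun l : ℕ => (l : ℝ) * f l) := by
    by_contra h
    unfold meanPMF at hμ
    rw [tsum_eq_zero_of_not_summable h] at hμ
    exact lt_irrefl _ hμ
  have hintg : Integrable (fun l : ℕ => (l : ℝ)) ν := by
    refine ⟨(measurable_of_countable _).aestronglyMeasurable, ?_⟩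
    unfold HasFiniteIntegral
    rw [lintegral_countable']
    have e : ∀ a : ℕ, ‖(a : ℝ)‖ₑ * ν {a} = ENNReal.ofReal ((a : ℝ) * f a) := by
      intro a
      rw [ENNReal.ofReal_mul (Nat.cast_nonneg _), hf a, ENNReal.ofReal_toReal (measure_ne_top _ _),
        Real.enorm_of_nonneg (Nat.cast_nonneg _)]
    simp_rw [e]
    exact hsummable.tsum_ofReal_lt_top
  have hintval : ∫ x, (x : ℝ) ∂ν = meanPMF f := by
    rw [integral_countable' hintg]
    unfold meanPMF
    apply tsum_congr
    intro l
    rw [hf l, smul_eq_mul, mul_comm]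
    rfl
  have has1 := slln ν (fun x => (x : ℝ)) hintg
  have has2 : ∀ᵐ ω ∂(Measure.infinitePi fun _ : ℕ => ν), ∀ l : ℕ,
      Tendsto (fun n : ℕ => (∑ i ∈ Finset.range n, if ω i = l then (1 : ℝ) else 0) / n)
        atTop (nhds (f l)) := by
    rw [ae_all_iff]
    intro l
    have hi : Integrable (fun x : ℕ => if x = l then (1 : ℝ) else 0) ν := by
      apply Integrable.of_bound (measurable_of_countable _).aestronglyMeasurable 1
      filter_upwards with x
      split_ifs <;> simp
    have := slln ν (fun x => if x = l then (1 : ℝ) else 0) hi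
    have hv : ∫ x : ℕ, (if x = l then (1 : ℝ) else 0) ∂ν = f l := by
      rw [integral_countable' hi, tsum_eq_single l]
      · rw [hf l]; simp; rfl
      · intro b hb; simp [hb]
    rw [hv] at this
    exact this
  have hmain : Tendsto (fun n : ℕ =>
        (cmLaw n ν) {p : (Fin n → ℕ) × (Fin n → Fin n → ℕ) |
            δ < (if 0 < empDens p.1 k then
                |ANNR (eraseDeg p.2) (erase p.2) k -
                  ∑' j : ℕ, sizeBiased f j * cdfOf (sizeBiased f) j|
              else 0)}) atTop (nhds 0) := by
    simp_rw [cmLaw_apply]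
    rw [← lintegral_zero (μ := Measure.infinitePi fun _ : ℕ => ν)]
    refine tendsto_lintegral_of_dominated_convergence (fun _ => 1) ?_ ?_ ?_ ?_
    · intro n
      exact (measurable_of_countable (fun d : Fin n → ℕ => uniformMatching (parityFix n d)
        {σ | (parityFix n d, cmEdges (parityFix n d) σ) ∈
          {p : (Fin n → ℕ) × (Fin n → Fin n → ℕ) |
            δ < (if 0 < empDens p.1 k then
                |ANNR (eraseDeg p.2) (erase p.2) k -
                  ∑' j : ℕ, sizeBiased f j * cdfOf (sizeBiased f) j|
              else 0)}})).comp (measurable_pi_lambda (fun (ω : ℕ → ℕ) (i : Fin n) => ω i)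
                fun i => measurable_pi_apply _)
    · intro n
      filter_upwards with ω
      exact uniformMatching_le_one _ _
    · simp
    · filter_upwards [has1, has2] with ω h1 h2
      rw [hintval] at h1
      refine main_seq (fun n => parityFix n (fun i : Fin n => ω i)) f hf0 (meanPMF f) hμ
        hsummable.hasSum ?_ ?_ k hk1 hfk δ hδ
      · intro l
        exact parity_tendsto ω (fun m => if m = l then (1 : ℝ) else 0)
          (fun m => by
            rw [abs_le]
            constructor <;> split_ifs <;> norm_num) (f l) (h2 l)
      · have := parity_tendsto ω (fun m => (m : ℝ)) (fun m => by simp) _ h1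
        refine this.congr fun n => ?_
        unfold degSum
        push_cast
        rfl
  have := (ENNReal.tendsto_toReal ENNReal.zero_ne_top).comp hmain
  rw [ENNReal.toReal_zero] at this
  exact this

end ANNDPaper
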